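/- For every prime p and every integer N ≥ 2, the integral 𝒵_N(ℙ¹(ℚ_p), s) converges absolutely if and only if s ∈ Ω_N, and in this case 𝒵_N(ℙ¹(ℚ_p), s) = (p/(p+1))^N · Σ_{(I_0,…,I_p)} ∏_{k=0}^{p} 𝒵_{I_k}(pℤ_p, s), where the sum runs over all (p+1)-tuples (I_0,…,I_p) of pairwise disjoint (possibly empty) subsets of [N] = {1,…,N} whose union is [N]. -/

import Mathlib

open MeasureTheory
open scoped LinearAlgebra.Projectivization

namespace LogCoulomb

noncomputable section

/-! ### The projective line over `ℚ_p`, its spherical metric and `PGL₂`-invariant measure -/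

variable (p : ℕ) [Fact p.Prime]

instance : MeasurableSpace ℚ_[p] := borel _
instance : BorelSpace ℚ_[p] := ⟨rfl⟩

/-- The projective line over `ℚ_p`. -/
abbrev P1 := ℙ ℚ_[p] (Fin 2 → ℚ_[p])

instance : TopologicalSpace (P1 p) :=
  inferInstanceAs (TopologicalSpace (Quotient _))

instance : MeasurableSpace (P1 p) := borel _
instance : BorelSpace (P1 p) := ⟨rfl⟩

/-- Spherical distance on homogeneous coordinates:
`δ((x₀,x₁),(y₀,y₁)) = |x₀y₁ - x₁y₀| / (max(|x₀|,|x₁|) ⬝ max(|y₀|,|y₁|))`. -/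
def sdelta (x y : Fin 2 → ℚ_[p]) : ℝ :=
  ‖x 0 * y 1 - x 1 * y 0‖ / (max ‖x 0‖ ‖x 1‖ * max ‖y 0‖ ‖y 1‖)

/-- The spherical metric on `ℙ¹(ℚ_p)`, defined via the canonical representatives. -/
def pdelta (ξ η : P1 p) : ℝ := sdelta p ξ.rep η.rep

open Classical in
/-- The action of a matrix on `ℙ¹(ℚ_p)`: `[x₀:x₁] ↦ [a x₀ + b x₁ : c x₀ + d x₁]`
(well-defined, and given by the first branch of the `if`, whenever `A` is invertible). -/
def mobius (A : Matrix (Fin 2) (Fin 2) ℚ_[p]) (ξ : P1 p) : P1 p :=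
  if h : A.mulVec ξ.rep ≠ 0 then Projectivization.mk ℚ_[p] (A.mulVec ξ.rep) h else ξ

/-- `ν` is invariant under the action of `GL₂(ℤ_p)` on `ℙ¹(ℚ_p)`; membership of the matrix
entries in `ℤ_p`, and invertibility of the matrix over `ℤ_p`, are phrased via the `p`-adic
norm on `ℚ_p`. -/
def IsGLInvariant (ν : Measure (P1 p)) : Prop :=
  ∀ A : Matrix (Fin 2) (Fin 2) ℚ_[p],
    (∀ i j, ‖A i j‖ ≤ 1) → ‖A.det‖ = 1 →
      ∀ M : Set (P1 p), MeasurableSet M → ν (mobius p A '' M) = ν M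

/-- The embedding `ι : ℚ_p → ℙ¹(ℚ_p)`, `x ↦ [x : 1]`. -/
def iota (x : ℚ_[p]) : P1 p :=
  Projectivization.mk ℚ_[p] ![x, 1] (by
    intro h
    have h1 := congrFun h 1
    simp at h1)

/-! ### Canonical partition functions -/

/-- The pairs `(i,j)` with `i < j`. -/
def pairs (N : ℕ) : Finset (Fin N × Fin N) := Finset.univ.filter fun q => q.1 < q.2

/-- The closed unit ball `ℤ_p = R` inside `ℚ_p`. -/
def Zball : Set ℚ_[p] := {x | ‖x‖ ≤ 1}

/-- The open unit ball `pℤ_p = P` inside `ℚ_p`. -/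
def Pball : Set ℚ_[p] := {x | ‖x‖ < 1}

/-- The one-component canonical partition function
`Z_N(X, β) = ∫_{X^N} ∏_{i<j} |x_i - x_j|^β dμ^N` (as a Bochner integral, whether or not it
converges absolutely). -/
def ZN (μ : Measure ℚ_[p]) [SigmaFinite μ] (X : Set ℚ_[p]) (N : ℕ) (β : ℂ) : ℂ :=
  ∫ x : Fin N → ℚ_[p], ∏ q ∈ pairs N, (‖x q.1 - x q.2‖ : ℂ) ^ β
    ∂(Measure.pi fun _ => μ.restrict X)

/-- The multivariate canonical partition function
`𝒵_I(X, s) = ∫_{X^I} ∏_{i<j, i,j ∈ I} |x_i - x_j|^{s_{ij}} dμ^I` for a subset `I ⊆ [N]`. -/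
def ZI (μ : Measure ℚ_[p]) [SigmaFinite μ] (X : Set ℚ_[p]) {N : ℕ} (I : Finset (Fin N))
    (s : Fin N → Fin N → ℂ) : ℂ :=
  ∫ x : I → ℚ_[p],
    ∏ q ∈ Finset.univ.filter (fun q : (↥I) × (↥I) => (q.1 : Fin N) < (q.2 : Fin N)),
      (‖x q.1 - x q.2‖ : ℂ) ^ s q.1.1 q.2.1
    ∂(Measure.pi fun _ => μ.restrict X)

/-- The multivariate canonical partition function
`𝒵_N(ℙ¹(ℚ_p), s) = ∫_{(ℙ¹(ℚ_p))^N} ∏_{i<j} δ(ξ_i,ξ_j)^{s_{ij}} dν^N`. -/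
def ZP1s (ν : Measure (P1 p)) [SigmaFinite ν] (N : ℕ) (s : Fin N → Fin N → ℂ) : ℂ :=
  ∫ x : Fin N → P1 p, ∏ q ∈ pairs N, ((pdelta p (x q.1) (x q.2) : ℝ) : ℂ) ^ s q.1 q.2
    ∂(Measure.pi fun _ => ν)

/-- The one-component canonical partition function `Z_N(ℙ¹(ℚ_p), β)`. -/
def ZP1 (ν : Measure (P1 p)) [SigmaFinite ν] (N : ℕ) (β : ℂ) : ℂ :=
  ∫ x : Fin N → P1 p, ∏ q ∈ pairs N, ((pdelta p (x q.1) (x q.2) : ℝ) : ℂ) ^ β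
    ∂(Measure.pi fun _ => ν)

/-! ### The quadratic recurrence -/

/-- The factor `ρ_{N,k}(t,β)` appearing in the quadratic recurrence; here
`N.choose 2 = N(N-1)/2`. -/
def rho (N k : ℕ) (t : ℝ) (β : ℂ) : ℂ :=
  if t = 0 then
    (((N : ℂ) + (N.choose 2 : ℂ) * β) * (1 - 2 * (k : ℂ) / (N : ℂ)) + 1) /
      (((N : ℂ) + (N.choose 2 : ℂ) * β) - 1)
  else
    Complex.sinh (((t : ℂ) / 2) * (((N : ℂ) + (N.choose 2 : ℂ) * β) * (1 - 2 * (k : ℂ) / (N : ℂ)) + 1)) /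
      Complex.sinh (((t : ℂ) / 2) * (((N : ℂ) + (N.choose 2 : ℂ) * β) - 1))

/-- The quadratic recurrence: `F 0 = F 1 = 1` and
`F N t β = ∑_{k=1}^{N-1} (k/N) ρ_{N,k}(t,β) F_{N-k}(t,β) F_k(t,β)` for `N ≥ 2`. -/
def F : ℕ → ℝ → ℂ → ℂ
  | 0, _, _ => 1
  | 1, _, _ => 1
  | N + 2, t, β =>
    ∑ k ∈ (Finset.Icc 1 (N + 1)).attach,
      (((k : ℕ) : ℂ) / ((N : ℂ) + 2)) * rho (N + 2) k t β *
        F (N + 2 - (k : ℕ)) t β * F (k : ℕ) t β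
  decreasing_by
  all_goals
    have hk := Finset.mem_Icc.mp k.2
    omega

/-! ### Splitting chains -/

/-- A splitting chain `Λ_0 > Λ_1 > ⋯ > Λ_L` of set partitions of the subset `I ⊆ [N]`,
beginning with the trivial partition `{I}` and ending with the partition of `I` into
singletons.  (The values `Λ ℓ` for `ℓ > L` are required to be `∅`, so that a chain is
determined by the genuine data `Λ_0, …, Λ_L`.) -/
structure SplChain (N : ℕ) (I : Finset (Fin N)) where
  L : ℕ
  Λ : ℕ → Finset (Finset (Fin N))
  nonempty_mem : ∀ ℓ ≤ L, ∀ B ∈ Λ ℓ, B.Nonempty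
  subset_mem : ∀ ℓ ≤ L, ∀ B ∈ Λ ℓ, B ⊆ I
  cover : ∀ ℓ ≤ L, ∀ i ∈ I, ∃! B, B ∈ Λ ℓ ∧ i ∈ B
  first : Λ 0 = {I}
  last : Λ L = I.image fun i => {i}
  refines : ∀ ℓ < L, ∀ B ∈ Λ (ℓ + 1), ∃ C ∈ Λ ℓ, B ⊆ C
  strict : ∀ ℓ < L, Λ (ℓ + 1) ≠ Λ ℓ
  trailing : ∀ ℓ, L < ℓ → Λ ℓ = ∅

variable {N : ℕ} {I : Finset (Fin N)}

/-- The branches of a splitting chain: the non-singleton parts,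
`ℬ(𝔖) = (Λ_0 ∪ ⋯ ∪ Λ_{L-1}) \ Λ_L`. -/
def SplChain.branches (S : SplChain N I) : Finset (Finset (Fin N)) :=
  ((Finset.range S.L).biUnion S.Λ) \ S.Λ S.L

/-- The depth `ℓ_𝔖(λ) = max {ℓ : λ ∈ Λ_ℓ}` of a branch. -/
def SplChain.depth (S : SplChain N I) (lam : Finset (Fin N)) : ℕ :=
  ((Finset.range (S.L + 1)).filter fun ℓ => lam ∈ S.Λ ℓ).sup id

/-- The degree `deg_𝔖(λ) = #{λ' ∈ Λ_{ℓ_𝔖(λ)+1} : λ' ⊆ λ}` of a branch. -/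
def SplChain.degree (S : SplChain N I) (lam : Finset (Fin N)) : ℕ :=
  ((S.Λ (S.depth lam + 1)).filter fun lam' => lam' ⊆ lam).card

/-- A splitting chain is reduced if every branch appears in exactly one partition of the
chain (namely the one at its depth). -/
def SplChain.Reduced (S : SplChain N I) : Prop :=
  ∀ lam ∈ S.branches, ∀ ℓ ≤ S.L, (lam ∈ S.Λ ℓ ↔ ℓ = S.depth lam)

/-- `e_λ(s) = #λ - 1 + ∑_{i<j, i,j ∈ λ} s_{ij}`. -/
def eexp (lam : Finset (Fin N)) (s : Fin N → Fin N → ℂ) : ℂ :=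
  (lam.card : ℂ) - 1 + ∑ q ∈ (pairs N).filter fun q => q.1 ∈ lam ∧ q.2 ∈ lam, s q.1 q.2

/-- Membership in `Ω_I`: `Re e_λ(s) > 0` for every `λ ⊆ I` with `#λ > 1`. -/
def InOmega (I : Finset (Fin N)) (s : Fin N → Fin N → ℂ) : Prop :=
  ∀ lam ⊆ I, 1 < lam.card → 0 < (eexp lam s).re


/-- The multivariate canonical partition function `𝒵_N(ℤ_p, s)` over `Fin N`-indexed tuples. -/
def ZNs (μ : Measure ℚ_[p]) [SigmaFinite μ] (X : Set ℚ_[p]) (N : ℕ)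
    (s : Fin N → Fin N → ℂ) : ℂ :=
  ∫ x : Fin N → ℚ_[p], ∏ q ∈ pairs N, (‖x q.1 - x q.2‖ : ℂ) ^ s q.1 q.2
    ∂(Measure.pi fun _ => μ.restrict X)

/-- The ball `p^v ℤ_p = {x : |x| ≤ p^{-v}}` in `ℚ_p`. -/
def pvball (v : ℤ) : Set ℚ_[p] := {x | ‖x‖ ≤ (p : ℝ) ^ (-v)}

/-- `G_N(q,β) = N! q^{(1/2)(N choose 2)β} F_N(log q, β)`. -/
def GN (N : ℕ) (β : ℂ) (q : ℝ) : ℂ :=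
  (N.factorial : ℂ) * (q : ℂ) ^ ((N.choose 2 : ℂ) * β / 2) * F N (Real.log q) β

/-- `H_N(q,β)`, the efficient formula for `Z_N(ℙ¹(K),β)` as a function of `q`. -/
def HN (N : ℕ) (β : ℂ) (q : ℝ) : ℂ :=
  (N.factorial : ℂ) * ∑ k ∈ Finset.range (N + 1),
    Complex.cosh (((Real.log q : ℂ) / 2) * ((N : ℂ) + (N.choose 2 : ℂ) * β) *
          (1 - 2 * (k : ℂ) / (N : ℂ))) /
        (2 * Complex.cosh ((Real.log q : ℂ) / 2)) ^ N *
      F (N - k) (Real.log q) β * F k (Real.log q) β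

end

section generic

theorem pi_of_sum {N : ℕ} {K X Y : Type*} [Fintype K] [MeasurableSpace X] [MeasurableSpace Y]
    (m : Measure Y) (ν : Measure X) [IsProbabilityMeasure m] [SigmaFinite ν]
    (c : ENNReal) (φ : K → Y → X)
    (hφ : ∀ k, Measurable (φ k))
    (h : ∀ M, MeasurableSet M → ν M = c * ∑ k, m (φ k ⁻¹' M)) :
    Measure.pi (fun _ : Fin N => ν) =
      c ^ N • ∑ κ : Fin N → K, (Measure.pi (fun _ : Fin N => m)).map
        (fun x i => φ (κ i) (x i)) := by
  classical
  apply Measure.pi_eq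
  intro s hs
  simp only [Measure.smul_apply, Measure.finsetSum_apply, smul_eq_mul]
  simp_rw [h _ (hs _)]
  rw [Finset.prod_mul_distrib, Finset.prod_const, Finset.card_univ, Fintype.card_fin,
    Finset.prod_univ_sum, Fintype.piFinset_univ]
  congr 1
  refine Finset.sum_congr rfl fun κ _ => ?_
  have hmeas : Measurable (fun (x : Fin N → Y) i => φ (κ i) (x i)) :=
    measurable_pi_lambda _ fun i => (hφ _).comp (measurable_pi_apply i)
  rw [Measure.map_apply hmeas (MeasurableSet.univ_pi hs), ← Measure.pi_pi]
  congr 1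

/-- gluing of blocks -/
def glue {N : ℕ} {K Y : Type*} [DecidableEq K] (κ : Fin N → K)
    (z : (k : K) → (↥(Finset.univ.filter fun i => κ i = k) → Y)) : Fin N → Y :=
  fun i => z (κ i) ⟨i, by simp⟩

theorem measurable_glue {N : ℕ} {K Y : Type*} [DecidableEq K] [MeasurableSpace Y]
    (κ : Fin N → K) : Measurable (glue (Y := Y) κ) :=
  measurable_pi_lambda _ fun i => (measurable_pi_apply _).comp (measurable_pi_apply (κ i))

theorem map_glue {N : ℕ} {K Y : Type*} [Fintype K] [DecidableEq K] [MeasurableSpace Y]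
    (κ : Fin N → K) (m : Measure Y) [SigmaFinite m] :
    (Measure.pi fun k : K => Measure.pi
      fun _ : ↥(Finset.univ.filter fun i => κ i = k) => m).map (glue κ) =
      Measure.pi fun _ : Fin N => m := by
  symm
  apply Measure.pi_eq
  intro s hs
  rw [Measure.map_apply (measurable_glue κ) (MeasurableSet.univ_pi hs)]
  have : glue κ ⁻¹' (Set.univ.pi s) = Set.univ.pi fun k : K => Set.univ.pi
      fun i : ↥(Finset.univ.filter fun i => κ i = k) => s i.1 := by
    ext z
    simp only [Set.mem_preimage, Set.mem_univ_pi, glue]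
    constructor
    · rintro h k ⟨i, hi⟩
      obtain rfl : κ i = k := by simpa using hi
      exact h i
    · intro h i; exact h (κ i) ⟨i, by simp⟩
  rw [this, Measure.pi_pi]
  simp_rw [Measure.pi_pi]
  rw [← Finset.prod_fiberwise Finset.univ κ]
  refine Finset.prod_congr rfl fun k _ => ?_
  rw [← Finset.prod_coe_sort (Finset.univ.filter fun i => κ i = k) (fun i => m (s i))]

theorem lintegral_blocks {N : ℕ} {K Y : Type*} [Fintype K] [DecidableEq K] [MeasurableSpace Y]
    [Nonempty Y]
    (κ : Fin N → K) (m : Measure Y) [IsProbabilityMeasure m]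
    (G : K → (Fin N → Y) → ENNReal) (hG : ∀ k, Measurable (G k))
    (hdep : ∀ k x y, (∀ i, κ i = k → x i = y i) → G k x = G k y) :
    ∫⁻ x, ∏ k, G k x ∂(Measure.pi fun _ => m) = ∏ k, ∫⁻ x, G k x ∂(Measure.pi fun _ => m) := by
  let y0 : Y := Classical.arbitrary Y
  let ext : (k : K) → (↥(Finset.univ.filter fun i => κ i = k) → Y) → Fin N → Y :=
    fun k w i => if h : κ i = k then w ⟨i, by simpa using h⟩ else y0
  have hext : ∀ k, Measurable (ext k) := by
    intro k
    refine measurable_pi_lambda _ fun i => ?_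
    by_cases h : κ i = k
    · simp only [ext, h, dite_true]; exact measurable_pi_apply _
    · simp only [ext, h, dite_false]; exact measurable_const
  have key : ∀ k z, G k (glue κ z) = G k (ext k (z k)) := by
    intro k z
    apply hdep
    rintro i rfl
    simp [glue, ext]
  have hm : ∀ k, Measurable fun w => G k (ext k w) := fun k => (hG k).comp (hext k)
  let π : (k : K) → Measure (↥(Finset.univ.filter fun i => κ i = k) → Y) :=
    fun k => Measure.pi fun _ => m
  have hev : ∀ k, ∫⁻ z, G k (ext k (z k)) ∂(Measure.pi π) = ∫⁻ w, G k (ext k w) ∂(π k) :=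
    fun k => (measurePreserving_eval π k).lintegral_comp (hm k)
  have hsingle : ∀ k, ∫⁻ x, G k x ∂(Measure.pi fun _ => m) =
      ∫⁻ w, G k (ext k w) ∂(Measure.pi fun _ => m) := by
    intro k
    rw [← map_glue κ m, lintegral_map (hG k) (measurable_glue κ)]
    simp_rw [key]
    exact hev k
  rw [← map_glue κ m, lintegral_map (Finset.measurable_prod _ fun k _ => hG k) (measurable_glue κ)]
  simp_rw [key]
  have hI := ProbabilityTheory.lintegral_prod_eq_prod_lintegral_of_indepFun
    (μ := Measure.pi π) Finset.univ
    (fun k z => G k (ext k (z k)))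
    (ProbabilityTheory.iIndepFun_pi (X := fun k w => G k (ext k w)) (fun k => (hm k).aemeasurable))
    (fun k => (hm k).comp (measurable_pi_apply k))
  refine hI.trans (Finset.prod_congr rfl fun k _ => ?_)
  rw [map_glue, hsingle]
  exact hev k

theorem pi_smul {N : ℕ} {Y : Type*} [MeasurableSpace Y]
    (m : Measure Y) [SigmaFinite m] (c : ENNReal) (hc : c ≠ ⊤) :
    Measure.pi (fun _ : Fin N => c • m) = c ^ N • Measure.pi (fun _ : Fin N => m) := by
  have : SigmaFinite (c • m) := by
    lift c to NNReal using hc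
    exact inferInstanceAs (SigmaFinite (c • m))
  apply Measure.pi_eq
  intro s hs
  simp [Finset.prod_mul_distrib]

end generic

section padic
variable {p : ℕ} [Fact p.Prime]

instance : SecondCountableTopology ℚ_[p] := inferInstance

theorem isOpen_Pball : IsOpen (Pball p) := by
  have : Pball p = Metric.ball 0 1 := by ext x; simp [Pball]
  rw [this]; exact Metric.isOpen_ball

theorem measurableSet_Pball : MeasurableSet (Pball p) := isOpen_Pball.measurableSet

theorem measurableSet_Zball : MeasurableSet (Zball p) := by
  have : Zball p = Metric.closedBall 0 1 := by ext x; simp [Zball]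
  rw [this]; exact Metric.isClosed_closedBall.measurableSet

theorem Pball_add {x y : ℚ_[p]} (hx : x ∈ Pball p) (hy : y ∈ Pball p) : x + y ∈ Pball p :=
  lt_of_le_of_lt (Padic.nonarchimedean x y) (max_lt hx hy)

theorem Pball_neg {x : ℚ_[p]} (hx : x ∈ Pball p) : -x ∈ Pball p := by
  simpa [Pball] using hx

theorem Pball_sub {x y : ℚ_[p]} (hx : x ∈ Pball p) (hy : y ∈ Pball p) : x - y ∈ Pball p := by
  rw [sub_eq_add_neg]; exact Pball_add hx (Pball_neg hy)

theorem Zball_add {x y : ℚ_[p]} (hx : x ∈ Zball p) (hy : y ∈ Zball p) : x + y ∈ Zball p :=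
  (Padic.nonarchimedean x y).trans (max_le hx hy)

theorem Zball_neg {x : ℚ_[p]} (hx : x ∈ Zball p) : -x ∈ Zball p := by
  simpa [Zball] using hx

/-- supported on `pℤ_p` and invariant under it -/
def PInv (m : Measure ℚ_[p]) : Prop :=
  m (Pball p)ᶜ = 0 ∧ ∀ y ∈ Pball p, ∀ M, MeasurableSet M → m ((fun x => x + y) ⁻¹' M) = m M

theorem PInv.uniq {m m' : Measure ℚ_[p]} [IsProbabilityMeasure m] [IsFiniteMeasure m']
    (h : PInv m) (h' : PInv m') : m' = m' Set.univ • m := by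
  ext M hM
  have hae : ∀ {m : Measure ℚ_[p]}, PInv m → ∀ᵐ y ∂m, y ∈ Pball p := fun h => h.1
  have hmeas : Measurable (Function.uncurry fun x y : ℚ_[p] => M.indicator (1 : ℚ_[p] → ENNReal) (x + y)) :=
    (measurable_one.indicator hM).comp measurable_add
  have h1 : ∫⁻ y, ∫⁻ x, M.indicator (1 : ℚ_[p] → ENNReal) (x + y) ∂m' ∂m = m' M := by
    have : ∀ᵐ y ∂m, ∫⁻ x, M.indicator (1 : ℚ_[p] → ENNReal) (x + y) ∂m' = m' M := by
      filter_upwards [hae h] with y hy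
      rw [← h'.2 y hy M hM, ← lintegral_indicator_one (measurable_add_const y hM)]
      rfl
    rw [lintegral_congr_ae this]; simp
  have h2 : ∫⁻ x, ∫⁻ y, M.indicator (1 : ℚ_[p] → ENNReal) (x + y) ∂m ∂m' = m M * m' Set.univ := by
    have : ∀ᵐ x ∂m', ∫⁻ y, M.indicator (1 : ℚ_[p] → ENNReal) (x + y) ∂m = m M := by
      filter_upwards [hae h'] with y hy
      rw [← h.2 y hy M hM, ← lintegral_indicator_one (measurable_add_const y hM)]
      simp_rw [add_comm y]
      rfl
    rw [lintegral_congr_ae this]; simp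
  rw [← h1, ← lintegral_lintegral_swap hmeas.aemeasurable, h2]
  simp [mul_comm]

theorem exists_residue {x : ℚ_[p]} (hx : x ∈ Zball p) : ∃ a : Fin p, x - (a : ℕ) ∈ Pball p := by
  obtain ⟨n, hn, h⟩ := PadicInt.exists_mem_range (⟨x, hx⟩ : ℤ_[p])
  refine ⟨⟨n, hn⟩, ?_⟩
  have := PadicInt.mem_nonunits.1 ((IsLocalRing.mem_maximalIdeal _).1 h)
  rw [PadicInt.norm_def] at this
  exact this

theorem norm_residue_sub {a b : ℕ} (ha : a < p) (hb : b < p) (hab : a ≠ b) :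
    ‖((a : ℚ_[p]) - b)‖ = 1 := by
  wlog h : b < a generalizing a b
  · rw [norm_sub_rev]; exact this hb ha hab.symm (by omega)
  rw [← Nat.cast_sub h.le, Padic.norm_natCast_eq_one_iff]
  have hpp : p.Prime := Fact.out
  exact (Nat.Prime.coprime_iff_not_dvd hpp).2 (Nat.not_dvd_of_pos_of_lt (by omega) (by omega))

theorem norm_nat_le (a : ℕ) : ‖(a : ℚ_[p])‖ ≤ 1 := by
  simpa using Padic.norm_int_le_one (p := p) (a : ℤ)

/-- difference of two points in different residue classes -/
theorem norm_residue_ne {a b : ℕ} (ha : a < p) (hb : b < p) (hab : a ≠ b) {x y : ℚ_[p]}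
    (hx : x ∈ Pball p) (hy : y ∈ Pball p) : ‖(x + a) - (y + b)‖ = 1 := by
  have h1 := norm_residue_sub (p := p) ha hb hab
  have h2 : ‖x - y‖ < 1 := Pball_sub hx hy
  rw [show (x + a) - (y + b) = (x - y) + ((a : ℚ_[p]) - b) by ring,
    Padic.add_eq_max_of_ne (by rw [h1]; exact h2.ne), h1]
  exact max_eq_right h2.le

theorem pinv_restrict (μ : Measure ℚ_[p]) [μ.IsAddHaarMeasure] : PInv (μ.restrict (Pball p)) := by
  constructor
  · rw [Measure.restrict_apply measurableSet_Pball.compl]; simp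
  · intro y hy M hM
    rw [Measure.restrict_apply hM, Measure.restrict_apply (measurable_add_const y hM),
      ← measure_preimage_add_right μ y (M ∩ Pball p)]
    congr 1
    ext x
    simp only [Set.mem_inter_iff, Set.mem_preimage, and_congr_right_iff]
    intro _
    exact ⟨fun h => Pball_add h hy, fun h => by simpa using Pball_sub h hy⟩

theorem Zball_decomp (μ : Measure ℚ_[p]) [μ.IsAddHaarMeasure] (M : Set ℚ_[p])
    (hM : MeasurableSet M) :
    μ (M ∩ Zball p) = ∑ a : Fin p, μ.restrict (Pball p) ((fun x => x + ((a : ℕ) : ℚ_[p])) ⁻¹' M) := by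
  have hset : M ∩ Zball p = ⋃ a : Fin p,
      M ∩ (fun x => x + -((a : ℕ) : ℚ_[p])) ⁻¹' (Pball p) := by
    ext x
    simp only [Set.mem_inter_iff, Set.mem_iUnion, Set.mem_preimage]
    constructor
    · rintro ⟨h1, h2⟩
      obtain ⟨a, ha⟩ := exists_residue h2
      exact ⟨a, h1, by simpa [sub_eq_add_neg] using ha⟩
    · rintro ⟨a, h1, h2⟩
      refine ⟨h1, ?_⟩
      have := Zball_add (x := x + -((a : ℕ) : ℚ_[p])) (y := (a : ℕ)) (show ‖_‖ ≤ 1 from le_of_lt h2) (norm_nat_le _)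
      simpa using this
  rw [hset, measure_iUnion, tsum_fintype]
  · refine Finset.sum_congr rfl fun a _ => ?_
    rw [Measure.restrict_apply (measurable_add_const _ hM),
      ← measure_preimage_add_right μ ((a : ℕ) : ℚ_[p]) (M ∩ _)]
    congr 1
    ext x
    simp
  · intro a b hab
    refine Set.disjoint_left.2 ?_
    rintro x ⟨_, h1⟩ ⟨_, h2⟩
    have := norm_residue_ne a.2 b.2 (fun h => hab (Fin.ext h)) h1 h2
    simp at this
  · intro a
    exact hM.inter (measurable_add_const _ measurableSet_Pball)

theorem mu_Pball (μ : Measure ℚ_[p]) [μ.IsAddHaarMeasure] (hμ : μ (Zball p) = 1) :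
    (p : ENNReal) * μ (Pball p) = 1 := by
  have := Zball_decomp μ Set.univ MeasurableSet.univ
  simp [hμ] at this
  exact this.symm

/-- normalized measure on `pℤ_p` -/
noncomputable def mP (μ : Measure ℚ_[p]) : Measure ℚ_[p] := (p : ENNReal) • μ.restrict (Pball p)

theorem mP_prob (μ : Measure ℚ_[p]) [μ.IsAddHaarMeasure] (hμ : μ (Zball p) = 1) :
    IsProbabilityMeasure (mP μ) := ⟨by simp [mP, mu_Pball μ hμ]⟩

theorem mP_pinv (μ : Measure ℚ_[p]) [μ.IsAddHaarMeasure] : PInv (mP μ) := by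
  have := pinv_restrict μ
  exact ⟨by simp [mP, this.1, -Measure.restrict_apply'], fun y hy M hM => by
    simp only [mP, Measure.smul_apply, this.2 y hy M hM]⟩

theorem mP_ae (μ : Measure ℚ_[p]) [μ.IsAddHaarMeasure] : ∀ᵐ x ∂(mP μ), x ∈ Pball p :=
  (mP_pinv μ).1

/-- the contractions -/
noncomputable def psi (p : ℕ) [Fact p.Prime] (a : Fin p) (x : ℚ_[p]) : ℚ_[p] := p * (x + (a : ℕ))

theorem measurable_psi (a : Fin p) : Measurable (psi p a) := by
  unfold psi
  have : Continuous fun x : ℚ_[p] => (p : ℚ_[p]) * (x + (a : ℕ)) := by fun_prop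
  exact this.measurable

theorem norm_p_lt : ‖(p : ℚ_[p])‖ < 1 := Padic.norm_p_lt_one

theorem p_ne : (p : ℚ_[p]) ≠ 0 := by
  exact_mod_cast (Fact.out : p.Prime).ne_zero

theorem mP_selfsim (μ : Measure ℚ_[p]) [μ.IsAddHaarMeasure] (hμ : μ (Zball p) = 1)
    (M : Set ℚ_[p]) (hM : MeasurableSet M) :
    mP μ M = (p : ENNReal)⁻¹ * ∑ a : Fin p, mP μ (psi p a ⁻¹' M) := by
  have hp0 : (p : ENNReal) ≠ 0 := by exact_mod_cast (Fact.out : p.Prime).ne_zero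
  have hmul : Measurable (fun x : ℚ_[p] => (p : ℚ_[p]) * x) :=
    (continuous_const_mul (p : ℚ_[p])).measurable
  have := mP_prob μ hμ
  have : IsProbabilityMeasure (μ.restrict (Zball p)) := ⟨by simp [hμ]⟩
  let m' := (μ.restrict (Zball p)).map (fun x : ℚ_[p] => (p : ℚ_[p]) * x)
  have : IsProbabilityMeasure m' := Measure.isProbabilityMeasure_map hmul.aemeasurable
  have hm' : PInv m' := by
    constructor
    · rw [Measure.map_apply hmul measurableSet_Pball.compl, Measure.restrict_apply
        (hmul measurableSet_Pball.compl)]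
      convert measure_empty (μ := μ)
      ext x
      simp only [Set.preimage_compl, Set.mem_inter_iff, Set.mem_compl_iff, Set.mem_preimage,
        Set.mem_empty_iff_false, iff_false, not_and]
      intro h1 h2
      apply h1
      change ‖_‖ < 1
      rw [norm_mul]
      exact mul_lt_one_of_nonneg_of_lt_one_left (norm_nonneg _) norm_p_lt h2
    · intro y hy M hM
      obtain ⟨z, rfl⟩ : ∃ z, y = p * z := ⟨y / p, by field_simp [p_ne (p := p)]⟩
      have hz : z ∈ Zball p := by
        change ‖z‖ ≤ 1
        have hy : ‖(p : ℚ_[p]) * z‖ < 1 := hy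
        by_contra hcon
        have h1 := (Padic.norm_lt_pow_iff_norm_le_pow_sub_one ((p : ℚ_[p]) * z) 0).1 (by simpa using hy)
        simp only [zero_sub, zpow_neg, zpow_one, norm_mul, Padic.norm_p] at h1
        have hp : (0 : ℝ) < (p : ℝ)⁻¹ := by
          have := (Fact.out : p.Prime).pos
          positivity
        exact hcon (le_of_mul_le_mul_left (by simpa using h1) hp)
      have hM2 := measurable_add_const ((p : ℚ_[p]) * z) hM
      rw [Measure.map_apply hmul hM, Measure.map_apply hmul hM2, Measure.restrict_apply (hmul hM),
        Measure.restrict_apply (hmul hM2),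
        ← measure_preimage_add_right μ z ((fun x : ℚ_[p] => (p : ℚ_[p]) * x) ⁻¹' M ∩ Zball p)]
      congr 1
      ext x
      simp only [Set.mem_inter_iff, Set.mem_preimage, mul_add, and_congr_right_iff]
      intro _
      exact ⟨fun h => Zball_add h hz, fun h => by simpa using Zball_add h (Zball_neg hz)⟩
  have h1 := hm'.uniq (mP_pinv μ)
  rw [measure_univ, one_smul] at h1
  rw [h1, Measure.map_apply hmul hM, Measure.restrict_apply (hmul hM), Zball_decomp μ _ (hmul hM),
    ← h1]
  simp only [mP, Measure.smul_apply, smul_eq_mul]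
  rw [← Finset.mul_sum, ← mul_assoc, ENNReal.inv_mul_cancel hp0 (ENNReal.natCast_ne_top p), one_mul]
  rfl

theorem psi_sub_eq (a : Fin p) (x y : ℚ_[p]) :
    ‖psi p a x - psi p a y‖ = (p : ℝ)⁻¹ * ‖x - y‖ := by
  rw [psi, psi, ← mul_sub, norm_mul, Padic.norm_p]; congr 2; ring

theorem psi_sub_ne {a b : Fin p} (hab : a ≠ b) {x y : ℚ_[p]} (hx : x ∈ Pball p)
    (hy : y ∈ Pball p) : ‖psi p a x - psi p b y‖ = (p : ℝ)⁻¹ := by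
  rw [psi, psi, ← mul_sub, norm_mul, Padic.norm_p,
    norm_residue_ne a.2 b.2 (fun h => hab (Fin.ext h)) hx hy, mul_one]

end padic

section rec
variable {p : ℕ} [Fact p.Prime] {N : ℕ}

/-- absolute value of a factor -/
noncomputable def hh (s : Fin N → Fin N → ℂ) (q : Fin N × Fin N) (r : ℝ) : ENNReal :=
  ‖(r : ℂ) ^ s q.1 q.2‖ₑ

/-- absolute value of the integrand for a set of pairs -/
noncomputable def prS (s : Fin N → Fin N → ℂ) (S : Finset (Fin N × Fin N)) (x : Fin N → ℚ_[p]) :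
    ENNReal := ∏ q ∈ S, hh s q ‖x q.1 - x q.2‖

/-- its integral -/
noncomputable def DD (μ : Measure ℚ_[p]) (s : Fin N → Fin N → ℂ) (S : Finset (Fin N × Fin N)) :
    ENNReal := ∫⁻ x, prS s S x ∂(Measure.pi fun _ => mP μ)

/-- pairs inside a set -/
def PI (I : Finset (Fin N)) : Finset (Fin N × Fin N) :=
  (pairs N).filter fun q => q.1 ∈ I ∧ q.2 ∈ I

theorem mem_PI {I : Finset (Fin N)} {q : Fin N × Fin N} :
    q ∈ PI I ↔ q.1 < q.2 ∧ q.1 ∈ I ∧ q.2 ∈ I := by simp [PI, pairs]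

theorem measurable_hh (s : Fin N → Fin N → ℂ) (q) : Measurable (hh s q) :=
  (Complex.measurable_ofReal.pow_const _).enorm

theorem measurable_prS (s : Fin N → Fin N → ℂ) (S) : Measurable (prS (p := p) s S) := by
  unfold prS
  refine Finset.measurable_prod _ fun q _ => (measurable_hh s q).comp ?_
  exact ((measurable_pi_apply q.1).sub (measurable_pi_apply q.2)).norm

theorem hh_mul (s : Fin N → Fin N → ℂ) (q) {a b : ℝ} (ha : 0 ≤ a) (hb : 0 ≤ b) :
    hh s q (a * b) = hh s q a * hh s q b := by
  unfold hh
  rw [Complex.ofReal_mul, Complex.mul_cpow_ofReal_nonneg ha hb, enorm_mul]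

theorem hh_one (s : Fin N → Fin N → ℂ) (q) : hh s q 1 = 1 := by simp [hh]

theorem hh_zero_le (s : Fin N → Fin N → ℂ) (q) : hh s q 0 ≤ 1 := by
  unfold hh
  by_cases h : s q.1 q.2 = 0
  · simp [h]
  · simp [Complex.zero_cpow h]

theorem hh_p (s : Fin N → Fin N → ℂ) (q) :
    hh s q (p : ℝ)⁻¹ = (p : ENNReal) ^ (-(s q.1 q.2).re) := by
  have hp : (0 : ℝ) < p := by exact_mod_cast (Fact.out : p.Prime).pos
  unfold hh
  rw [← ofReal_norm, Complex.norm_cpow_eq_rpow_re_of_pos (inv_pos.2 hp),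
    Real.inv_rpow hp.le, ← Real.rpow_neg hp.le, ← ENNReal.ofReal_rpow_of_pos hp]
  simp

theorem ae_P (μ : Measure ℚ_[p]) [μ.IsAddHaarMeasure] (hμ : μ (Zball p) = 1) :
    ∀ᵐ x ∂(Measure.pi fun _ : Fin N => mP μ), ∀ i, x i ∈ Pball p := by
  have := mP_prob μ hμ
  rw [ae_all_iff]
  intro i
  exact (Measure.quasiMeasurePreserving_eval (fun _ : Fin N => mP μ) i).ae (mP_ae μ)

theorem lint_rec (μ : Measure ℚ_[p]) [μ.IsAddHaarMeasure] (hμ : μ (Zball p) = 1)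
    (F : (Fin N → ℚ_[p]) → ENNReal) (hF : Measurable F) :
    ∫⁻ x, F x ∂(Measure.pi fun _ => mP μ) = (p : ENNReal)⁻¹ ^ N * ∑ κ : Fin N → Fin p,
      ∫⁻ x, F (fun i => psi p (κ i) (x i)) ∂(Measure.pi fun _ => mP μ) := by
  have := mP_prob μ hμ
  conv_lhs => rw [pi_of_sum (N := N) (mP μ) (mP μ) (p : ENNReal)⁻¹ (psi p) measurable_psi
    (mP_selfsim μ hμ)]
  rw [lintegral_smul_measure, lintegral_finsetSum_measure, smul_eq_mul]
  congr 1
  refine Finset.sum_congr rfl fun κ _ => ?_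
  rw [lintegral_map hF]
  exact measurable_pi_lambda _ fun i => (measurable_psi _).comp (measurable_pi_apply i)

/-- scaling constant -/
noncomputable def TT (p : ℕ) (s : Fin N → Fin N → ℂ) (S : Finset (Fin N × Fin N)) : ENNReal :=
  ∏ q ∈ S, hh s q (p : ℝ)⁻¹

/-- pairs in the same class -/
def same {K : Type*} [DecidableEq K] (κ : Fin N → K) (S : Finset (Fin N × Fin N)) :
    Finset (Fin N × Fin N) := S.filter fun q => κ q.1 = κ q.2

theorem mem_same {K : Type*} [DecidableEq K] {κ : Fin N → K} {S : Finset (Fin N × Fin N)}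
    {q : Fin N × Fin N} : q ∈ same κ S ↔ q ∈ S ∧ κ q.1 = κ q.2 := by simp [same]

theorem prS_psi (s : Fin N → Fin N → ℂ) (S : Finset (Fin N × Fin N)) (κ : Fin N → Fin p)
    (x : Fin N → ℚ_[p]) (hx : ∀ i, x i ∈ Pball p) :
    prS s S (fun i => psi p (κ i) (x i)) = TT p s S * prS s (same κ S) x := by
  unfold prS TT same
  rw [Finset.prod_filter, ← Finset.prod_mul_distrib]
  refine Finset.prod_congr rfl fun q _ => ?_
  split_ifs with h
  · dsimp only
    rw [h, psi_sub_eq, hh_mul _ _ (by positivity) (norm_nonneg _)]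
  · rw [psi_sub_ne h (hx _) (hx _), mul_one]

theorem DD_rec (μ : Measure ℚ_[p]) [μ.IsAddHaarMeasure] (hμ : μ (Zball p) = 1)
    (s : Fin N → Fin N → ℂ) (S : Finset (Fin N × Fin N)) :
    DD μ s S = (p : ENNReal)⁻¹ ^ N * (TT p s S * ∑ κ : Fin N → Fin p, DD μ s (same κ S)) := by
  unfold DD
  rw [lint_rec μ hμ _ (measurable_prS s S)]
  congr 1
  rw [Finset.mul_sum]
  refine Finset.sum_congr rfl fun κ _ => ?_
  rw [← lintegral_const_mul _ (measurable_prS s _)]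
  refine lintegral_congr_ae ?_
  filter_upwards [ae_P μ hμ] with x hx
  exact prS_psi s S κ x hx

theorem TT_eq (s : Fin N → Fin N → ℂ) (S : Finset (Fin N × Fin N)) :
    TT p s S = (p : ENNReal) ^ (-(∑ q ∈ S, s q.1 q.2).re) := by
  have hp0 : (p : ENNReal) ≠ 0 := by exact_mod_cast (Fact.out : p.Prime).ne_zero
  unfold TT
  simp_rw [hh_p]
  induction S using Finset.induction_on with
  | empty => simp
  | insert a S ha ih =>
    rw [Finset.prod_insert ha, Finset.sum_insert ha, ih, Complex.add_re, neg_add,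
      ENNReal.rpow_add _ _ hp0 (ENNReal.natCast_ne_top p)]

/-- functions constant on `I` -/
def constK (p : ℕ) (I : Finset (Fin N)) : Finset (Fin N → Fin p) :=
  Finset.univ.filter fun κ => ∀ i ∈ I, ∀ j ∈ I, κ i = κ j

theorem card_constK (I : Finset (Fin N)) (hI : I.Nonempty) :
    (constK p I).card * p ^ I.card = p ^ (N + 1) := by
  obtain ⟨i0, hi0⟩ := hI
  have h1 := Finset.card_eq_sum_card_fiberwise (s := constK p I) (t := Finset.univ)
    (f := fun κ => κ i0) (by intro _ _; simp)
  have h2 : ∀ k : Fin p, ((constK p I).filter fun κ => κ i0 = k).card * p ^ I.card = p ^ N := by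
    intro k
    have : (constK p I).filter (fun κ => κ i0 = k) =
        Fintype.piFinset fun i => if i ∈ I then {k} else (Finset.univ : Finset (Fin p)) := by
      ext κ
      simp only [constK, Finset.mem_filter, Finset.mem_univ, true_and, Fintype.mem_piFinset]
      constructor
      · rintro ⟨h, rfl⟩ i
        split_ifs with hi
        · simpa using h i hi i0 hi0
        · simp
      · intro h
        have h' : ∀ i ∈ I, κ i = k := fun i hi => by simpa [hi] using h i
        exact ⟨fun i hi j hj => by rw [h' i hi, h' j hj], h' i0 hi0⟩
    rw [this, Fintype.card_piFinset]
    have : ∀ i, (if i ∈ I then {k} else (Finset.univ : Finset (Fin p))).card =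
        if i ∈ I then 1 else p := by intro i; split_ifs <;> simp
    simp_rw [this]
    have h3 : ∏ i ∈ I, p = ∏ i : Fin N, if i ∈ I then p else 1 := by
      rw [← Finset.prod_filter]; simp
    rw [← Finset.prod_const, h3, ← Finset.prod_mul_distrib]
    rw [Finset.prod_congr rfl (g := fun _ => p) (fun i _ => by split_ifs <;> simp)]
    simp
  rw [h1, Finset.sum_mul]
  simp_rw [h2]
  simp [pow_succ, mul_comm]

theorem coef_eq (s : Fin N → Fin N → ℂ) (I : Finset (Fin N)) (hI : I.Nonempty) :
    (p : ENNReal)⁻¹ ^ N * TT p s (PI I) * ((constK p I).card : ENNReal) =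
      (p : ENNReal) ^ (-(eexp I s).re) := by
  have hp0 : (p : ENNReal) ≠ 0 := by exact_mod_cast (Fact.out : p.Prime).ne_zero
  have hpt := ENNReal.natCast_ne_top p
  have hc : ((constK p I).card : ENNReal) = (p : ENNReal) ^ ((N : ℝ) + 1 - I.card) := by
    have : ((constK p I).card : ENNReal) * (p : ENNReal) ^ I.card = (p : ENNReal) ^ (N + 1) := by
      exact_mod_cast card_constK (p := p) I hI
    rw [ENNReal.rpow_sub _ _ hp0 hpt, ENNReal.rpow_natCast, ← Nat.cast_succ, ENNReal.rpow_natCast,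
      ← this, ENNReal.mul_div_cancel_right (pow_ne_zero _ hp0) (ENNReal.pow_ne_top hpt)]
  rw [hc, TT_eq, ← ENNReal.inv_pow, ← ENNReal.rpow_natCast, ← ENNReal.rpow_neg,
    ← ENNReal.rpow_add _ _ hp0 hpt, ← ENNReal.rpow_add _ _ hp0 hpt]
  congr 1
  simp only [eexp, PI, Complex.add_re, Complex.sub_re, Complex.natCast_re, Complex.one_re]
  ring

theorem same_const {I : Finset (Fin N)} {κ : Fin N → Fin p} (h : κ ∈ constK p I) :
    same κ (PI I) = PI I := by
  unfold same
  rw [Finset.filter_true_of_mem]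
  intro q hq
  rw [mem_PI] at hq
  simp only [constK, Finset.mem_filter, Finset.mem_univ, true_and] at h
  exact h _ hq.2.1 _ hq.2.2

/-- remainder -/
noncomputable def RR (μ : Measure ℚ_[p]) (s : Fin N → Fin N → ℂ) (I : Finset (Fin N)) : ENNReal :=
  (p : ENNReal)⁻¹ ^ N * TT p s (PI I) *
    ∑ κ ∈ Finset.univ.filter (fun κ => κ ∉ constK p I), DD μ s (same κ (PI I))

theorem DD_eq (μ : Measure ℚ_[p]) [μ.IsAddHaarMeasure] (hμ : μ (Zball p) = 1)
    (s : Fin N → Fin N → ℂ) (I : Finset (Fin N)) (hI : I.Nonempty) :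
    DD μ s (PI I) = (p : ENNReal) ^ (-(eexp I s).re) * DD μ s (PI I) + RR μ s I := by
  conv_lhs => rw [DD_rec μ hμ, ← Finset.sum_filter_add_sum_filter_not _ (fun κ => κ ∈ constK p I)]
  rw [Finset.sum_congr rfl (g := fun _ => DD μ s (PI I))
    (fun κ hκ => by rw [same_const (Finset.mem_filter.1 hκ).2])]
  rw [Finset.sum_const, ← coef_eq s I hI, RR, nsmul_eq_mul]
  simp only [Finset.filter_univ_mem]
  ring

theorem TT_ne (s : Fin N → Fin N → ℂ) (S : Finset (Fin N × Fin N)) :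
    (p : ENNReal)⁻¹ ^ N * TT p s S ≠ 0 ∧ (p : ENNReal)⁻¹ ^ N * TT p s S ≠ ⊤ := by
  have hp0 : (p : ENNReal) ≠ 0 := by exact_mod_cast (Fact.out : p.Prime).ne_zero
  have hpt := ENNReal.natCast_ne_top p
  rw [TT_eq]
  refine ⟨mul_ne_zero (pow_ne_zero _ (ENNReal.inv_ne_zero.2 hpt)) ?_,
    ENNReal.mul_ne_top (ENNReal.pow_ne_top (ENNReal.inv_ne_top.2 hp0)) ?_⟩
  · simp [ENNReal.rpow_eq_zero_iff, hp0]
  · simp [ENNReal.rpow_eq_top_iff, hp0]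

/-- the indicator of one index -/
def ind1 (p : ℕ) [Fact p.Prime] (j : Fin N) : Fin N → Fin p := fun i =>
  if i = j then ⟨1, (Fact.out : p.Prime).one_lt⟩ else ⟨0, (Fact.out : p.Prime).pos⟩

theorem same_ind1 (I : Finset (Fin N)) (j : Fin N) :
    same (ind1 p j) (PI I) = PI (I.erase j) := by
  ext ⟨a, b⟩
  simp only [mem_same, mem_PI, ind1, Finset.mem_erase]
  by_cases ha : a = j <;> by_cases hb : b = j
  · subst ha; subst hb; simp
  · subst ha; simp [hb]
  · subst hb; simp [ha]
  · simp [ha, hb]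

theorem DD_erase (μ : Measure ℚ_[p]) [μ.IsAddHaarMeasure] (hμ : μ (Zball p) = 1)
    (s : Fin N → Fin N → ℂ) (I : Finset (Fin N)) (j : Fin N) :
    (p : ENNReal)⁻¹ ^ N * TT p s (PI I) * DD μ s (PI (I.erase j)) ≤ DD μ s (PI I) := by
  rw [DD_rec μ hμ s (PI I), ← mul_assoc, ← same_ind1 (p := p)]
  gcongr
  exact Finset.single_le_sum (f := fun κ : Fin N → Fin p => DD μ s (same κ (PI I)))
    (fun _ _ => zero_le) (Finset.mem_univ _)

theorem DD_empty (μ : Measure ℚ_[p]) [μ.IsAddHaarMeasure] (hμ : μ (Zball p) = 1)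
    (s : Fin N → Fin N → ℂ) : DD μ s ∅ = 1 := by
  have := mP_prob μ hμ
  simp [DD, prS]

theorem DD_pos (μ : Measure ℚ_[p]) [μ.IsAddHaarMeasure] (hμ : μ (Zball p) = 1)
    (s : Fin N → Fin N → ℂ) (I : Finset (Fin N)) : DD μ s (PI I) ≠ 0 := by
  induction I using Finset.induction_on with
  | empty =>
    have : PI (∅ : Finset (Fin N)) = ∅ := by ext; simp [mem_PI]
    rw [this, DD_empty μ hμ]; simp
  | insert a I ha ih =>
    intro h0
    have := DD_erase μ hμ s (insert a I) a
    rw [h0, Finset.erase_insert ha] at this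
    exact mul_ne_zero (TT_ne s _).1 ih (le_antisymm this zero_le)

theorem DD_mono (μ : Measure ℚ_[p]) [μ.IsAddHaarMeasure] (hμ : μ (Zball p) = 1)
    (s : Fin N → Fin N → ℂ) (I : Finset (Fin N)) (j : Fin N) (h : DD μ s (PI I) ≠ ⊤) :
    DD μ s (PI (I.erase j)) ≠ ⊤ := by
  intro h1
  have := DD_erase μ hμ s I j
  rw [h1, ENNReal.mul_top (TT_ne s _).1] at this
  exact h (top_le_iff.1 this)

theorem DD_subset (μ : Measure ℚ_[p]) [μ.IsAddHaarMeasure] (hμ : μ (Zball p) = 1)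
    (s : Fin N → Fin N → ℂ) (I : Finset (Fin N))
    (h : DD μ s (PI (Finset.univ : Finset (Fin N))) ≠ ⊤) :
    DD μ s (PI I) ≠ ⊤ := by
  have : ∀ J : Finset (Fin N), DD μ s (PI (Finset.univ \ J)) ≠ ⊤ := by
    intro J
    induction J using Finset.induction_on with
    | empty => simpa using h
    | insert a J ha ih =>
      rw [Finset.sdiff_insert]
      exact DD_mono μ hμ s _ a ih
  have h2 := this (Finset.univ \ I)
  rwa [Finset.sdiff_sdiff_eq_self (Finset.subset_univ I)] at h2

theorem necessity (μ : Measure ℚ_[p]) [μ.IsAddHaarMeasure] (hμ : μ (Zball p) = 1)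
    (s : Fin N → Fin N → ℂ) (I : Finset (Fin N)) (hI : 1 < I.card)
    (h : DD μ s (PI I) ≠ ⊤) : 0 < (eexp I s).re := by
  have hp1 : 1 ≤ (p : ENNReal) := by exact_mod_cast (Fact.out : p.Prime).one_lt.le
  obtain ⟨j, hj, k, hk, hjk⟩ := Finset.one_lt_card.1 hI
  by_contra hcon
  have h1 : 1 ≤ (p : ENNReal) ^ (-(eexp I s).re) := by
    calc (1 : ENNReal) = (1 : ENNReal) ^ (-(eexp I s).re) := (ENNReal.one_rpow _).symm
      _ ≤ _ := ENNReal.rpow_le_rpow hp1 (by linarith)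
  have hR : RR μ s I ≠ 0 := by
    refine mul_ne_zero (TT_ne s _).1 ?_
    intro h0
    rw [Finset.sum_eq_zero_iff] at h0
    refine DD_pos μ hμ s (I.erase j) ?_
    rw [← same_ind1 (p := p)]
    refine h0 _ ?_
    simp only [constK, Finset.mem_filter, Finset.mem_univ, true_and]
    intro h2
    have := h2 j hj k hk
    simp [ind1, hjk.symm] at this
  have h2 := DD_eq μ hμ s I ⟨j, hj⟩
  have h3 : DD μ s (PI I) + RR μ s I ≤ DD μ s (PI I) := by
    conv_rhs => rw [h2]
    gcongr
    exact le_mul_of_one_le_left zero_le h1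
  exact (ENNReal.lt_add_right h hR).not_ge h3

theorem same_block {K : Type*} [Fintype K] [DecidableEq K] (κ : Fin N → K) (I : Finset (Fin N))
    {M : Type*} [CommMonoid M] (f : Fin N × Fin N → M) :
    ∏ q ∈ same κ (PI I), f q = ∏ k, ∏ q ∈ PI (I.filter fun i => κ i = k), f q := by
  rw [← Finset.prod_fiberwise _ (fun q => κ q.1)]
  refine Finset.prod_congr rfl fun k _ => Finset.prod_congr ?_ fun _ _ => rfl
  ext q
  simp only [same, Finset.mem_filter, mem_PI]
  constructor
  · rintro ⟨⟨⟨h1, h2, h3⟩, h4⟩, h5⟩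
    exact ⟨h1, ⟨h2, h5⟩, h3, h4 ▸ h5⟩
  · rintro ⟨h1, ⟨h2, h5⟩, h3, h4⟩
    exact ⟨⟨⟨h1, h2, h3⟩, h5.trans h4.symm⟩, h5⟩

theorem DD_blocks (μ : Measure ℚ_[p]) [μ.IsAddHaarMeasure] (hμ : μ (Zball p) = 1)
    (s : Fin N → Fin N → ℂ) (I : Finset (Fin N)) {K : Type*} [Fintype K] [DecidableEq K]
    (κ : Fin N → K) :
    DD μ s (same κ (PI I)) = ∏ k, DD μ s (PI (I.filter fun i => κ i = k)) := by
  have := mP_prob μ hμ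
  unfold DD
  rw [← lintegral_blocks κ (mP μ) _ (fun k => measurable_prS s _)]
  · simp only [prS, same_block]
  · intro k x y hxy
    refine Finset.prod_congr rfl fun q hq => ?_
    simp only [mem_PI, Finset.mem_filter] at hq
    rw [hxy _ hq.2.1.2, hxy _ hq.2.2.2]

end rec

section suff
variable {p : ℕ} [Fact p.Prime] {N : ℕ}

/-- truncation -/
def EE (p : ℕ) [Fact p.Prime] (I : Finset (Fin N)) (n : ℕ) : Set (Fin N → ℚ_[p]) :=
  {x | ∃ i ∈ I, ∃ j ∈ I, ((p : ℝ)⁻¹) ^ n < ‖x i - x j‖}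

theorem measurableSet_EE (I : Finset (Fin N)) (n : ℕ) : MeasurableSet (EE p I n) := by
  have : EE p I n = ⋃ i ∈ I, ⋃ j ∈ I, {x : Fin N → ℚ_[p] | ((p : ℝ)⁻¹) ^ n < ‖x i - x j‖} := by
    ext x; simp [EE]
  rw [this]
  refine Finset.measurableSet_biUnion _ fun i _ => Finset.measurableSet_biUnion _ fun j _ => ?_
  exact measurableSet_lt measurable_const ((measurable_pi_apply i).sub (measurable_pi_apply j)).norm

theorem EE_mono (I : Finset (Fin N)) : Monotone (EE p I) := by
  refine monotone_nat_of_le_succ fun n => ?_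
  rintro x ⟨i, hi, j, hj, h⟩
  refine ⟨i, hi, j, hj, lt_of_le_of_lt ?_ h⟩
  have : (1 : ℝ) ≤ p := by exact_mod_cast (Fact.out : p.Prime).one_lt.le
  exact pow_le_pow_of_le_one (by positivity) (inv_le_one_of_one_le₀ this) (Nat.le_succ n)

/-- truncated integral -/
noncomputable def DE (μ : Measure ℚ_[p]) (s : Fin N → Fin N → ℂ) (I : Finset (Fin N)) (n : ℕ) :
    ENNReal := ∫⁻ x, (EE p I n).indicator (prS s (PI I)) x ∂(Measure.pi fun _ => mP μ)

theorem DE_zero (μ : Measure ℚ_[p]) [μ.IsAddHaarMeasure] (hμ : μ (Zball p) = 1)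
    (s : Fin N → Fin N → ℂ) (I : Finset (Fin N)) : DE μ s I 0 = 0 := by
  unfold DE
  rw [lintegral_congr_ae (g := fun _ => 0), lintegral_zero]
  filter_upwards [ae_P μ hμ] with x hx
  refine Set.indicator_of_notMem ?_ _
  rintro ⟨i, _, j, _, h⟩
  rw [pow_zero] at h
  exact absurd h (not_lt.2 (le_of_lt (Pball_sub (hx i) (hx j))))

theorem DE_succ (μ : Measure ℚ_[p]) [μ.IsAddHaarMeasure] (hμ : μ (Zball p) = 1)
    (s : Fin N → Fin N → ℂ) (I : Finset (Fin N)) (hI : I.Nonempty) (n : ℕ) :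
    DE μ s I (n + 1) ≤ (p : ENNReal) ^ (-(eexp I s).re) * DE μ s I n + RR μ s I := by
  have hppos : (0 : ℝ) < (p : ℝ)⁻¹ := by
    have := (Fact.out : p.Prime).pos
    positivity
  have hmeas := (measurable_prS (p := p) s (PI I)).indicator (measurableSet_EE I n)
  have hmeas' := (measurable_prS (p := p) s (PI I)).indicator (measurableSet_EE I (n + 1))
  have h1 : ∀ κ ∈ constK p I, ∫⁻ x, (EE p I (n + 1)).indicator (prS s (PI I))
      (fun i => psi p (κ i) (x i)) ∂(Measure.pi fun _ => mP μ) ≤ TT p s (PI I) * DE μ s I n := by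
    intro κ hκ
    unfold DE
    rw [← lintegral_const_mul _ hmeas]
    refine lintegral_mono_ae ?_
    filter_upwards [ae_P μ hμ] with x hx
    by_cases hE : (fun i => psi p (κ i) (x i)) ∈ EE p I (n + 1)
    · rw [Set.indicator_of_mem hE, prS_psi s _ κ x hx, same_const hκ, Set.indicator_of_mem]
      obtain ⟨i, hi, j, hj, h⟩ := hE
      refine ⟨i, hi, j, hj, ?_⟩
      simp only [constK, Finset.mem_filter, Finset.mem_univ, true_and] at hκ
      dsimp only at h
      rw [hκ i hi j hj, psi_sub_eq, pow_succ'] at h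
      exact lt_of_mul_lt_mul_left h hppos.le
    · rw [Set.indicator_of_notMem hE]; exact zero_le
  have h2 : ∀ κ : Fin N → Fin p, ∫⁻ x, (EE p I (n + 1)).indicator (prS s (PI I))
      (fun i => psi p (κ i) (x i)) ∂(Measure.pi fun _ => mP μ) ≤
        TT p s (PI I) * DD μ s (same κ (PI I)) := by
    intro κ
    unfold DD
    rw [← lintegral_const_mul _ (measurable_prS s _)]
    refine lintegral_mono_ae ?_
    filter_upwards [ae_P μ hμ] with x hx
    rw [← prS_psi s _ κ x hx]
    exact Set.indicator_le_self _ _ _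
  rw [DE, lint_rec μ hμ _ hmeas', ← Finset.sum_filter_add_sum_filter_not _ (fun κ => κ ∈ constK p I)]
  rw [← coef_eq s I hI, RR, mul_add]
  refine add_le_add ?_ ?_
  · calc _ ≤ (p : ENNReal)⁻¹ ^ N * ∑ κ ∈ Finset.univ.filter (fun κ => κ ∈ constK p I),
          TT p s (PI I) * DE μ s I n := by
            gcongr with κ hκ
            exact h1 κ (Finset.mem_filter.1 hκ).2
      _ = _ := by
        rw [Finset.sum_const, nsmul_eq_mul]
        simp only [Finset.filter_univ_mem]
        ring
  · calc _ ≤ (p : ENNReal)⁻¹ ^ N * ∑ κ ∈ Finset.univ.filter (fun κ => κ ∉ constK p I),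
          TT p s (PI I) * DD μ s (same κ (PI I)) := by
            gcongr with κ hκ
            exact h2 κ
      _ = _ := by
        rw [← Finset.mul_sum, mul_assoc]

theorem DD_le_DE (μ : Measure ℚ_[p]) [μ.IsAddHaarMeasure] (hμ : μ (Zball p) = 1)
    (s : Fin N → Fin N → ℂ) (I : Finset (Fin N)) :
    DD μ s (PI I) ≤ (⨆ n, DE μ s I n) + 1 := by
  have := mP_prob μ hμ
  unfold DD DE
  rw [← lintegral_iSup]
  · calc _ ≤ ∫⁻ x, ((⨆ n, (EE p I n).indicator (prS s (PI I)) x) + 1) ∂(Measure.pi fun _ => mP μ) := by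
          refine lintegral_mono fun x => ?_
          by_cases h : ∃ n, x ∈ EE p I n
          · obtain ⟨n, hn⟩ := h
            calc prS s (PI I) x = (EE p I n).indicator (prS s (PI I)) x :=
                  (Set.indicator_of_mem hn _).symm
              _ ≤ ⨆ n, (EE p I n).indicator (prS s (PI I)) x :=
                  le_iSup (fun n => (EE p I n).indicator (prS s (PI I)) x) n
              _ ≤ _ := le_self_add
          · refine le_trans ?_ le_add_self
            refine Finset.prod_le_one' fun q hq => ?_
            rw [mem_PI] at hq
            have h0 : ‖x q.1 - x q.2‖ = 0 := by
              by_contra hne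
              have hpos : 0 < ‖x q.1 - x q.2‖ := lt_of_le_of_ne (norm_nonneg _) (Ne.symm hne)
              have hp1 : ((p : ℝ)⁻¹) < 1 := by
                apply inv_lt_one_of_one_lt₀
                exact_mod_cast (Fact.out : p.Prime).one_lt
              obtain ⟨n, hn⟩ := exists_pow_lt_of_lt_one hpos hp1
              exact h ⟨n, _, hq.2.1, _, hq.2.2, hn⟩
            rw [h0]
            exact hh_zero_le s q
      _ = _ := by
        rw [lintegral_add_right _ measurable_const]; simp
  · intro n
    exact (measurable_prS s _).indicator (measurableSet_EE I n)
  · intro a b hab x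
    exact Set.indicator_le_indicator_of_subset (EE_mono I hab) (fun _ => zero_le) x

theorem sufficiency (μ : Measure ℚ_[p]) [μ.IsAddHaarMeasure] (hμ : μ (Zball p) = 1)
    (s : Fin N → Fin N → ℂ) (hs : InOmega Finset.univ s) (I : Finset (Fin N)) :
    DD μ s (PI I) ≠ ⊤ := by
  induction I using Finset.strongInduction with
  | H I ih =>
    by_cases hI : 1 < I.card
    · have hne : I.Nonempty := Finset.card_pos.1 (by omega)
      have he := hs I (Finset.subset_univ _) hI
      have hp1 : 1 < (p : ENNReal) := by exact_mod_cast (Fact.out : p.Prime).one_lt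
      set θ := (p : ENNReal) ^ (-(eexp I s).re) with hθ
      have hθ1 : θ < 1 := ENNReal.rpow_lt_one_of_one_lt_of_neg hp1 (by linarith)
      have hR : RR μ s I ≠ ⊤ := by
        refine ENNReal.mul_ne_top (TT_ne s _).2 ?_
        refine ENNReal.sum_ne_top.2 fun κ hκ => ?_
        rw [DD_blocks μ hμ]
        refine ENNReal.prod_ne_top fun k _ => ?_
        refine ih _ ?_
        refine Finset.filter_ssubset.2 ?_
        by_contra hcon
        push Not at hcon
        refine (Finset.mem_filter.1 hκ).2 ?_
        simp only [constK, Finset.mem_filter, Finset.mem_univ, true_and]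
        intro i hi j hj
        rw [hcon i hi, hcon j hj]
      have hb : ∀ n, DE μ s I n ≤ RR μ s I * (1 - θ)⁻¹ := by
        intro n
        induction n with
        | zero => rw [DE_zero μ hμ]; exact zero_le
        | succ n ihn =>
          refine (DE_succ μ hμ s I hne n).trans ?_
          calc _ ≤ θ * (RR μ s I * (1 - θ)⁻¹) + RR μ s I := by gcongr
            _ = RR μ s I * (1 - θ)⁻¹ := by
              have h0 : 1 - θ ≠ 0 := (tsub_pos_of_lt hθ1).ne'
              have ht : 1 - θ ≠ ⊤ := ne_top_of_le_ne_top ENNReal.one_ne_top tsub_le_self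
              have h1 : RR μ s I = (1 - θ) * (RR μ s I * (1 - θ)⁻¹) := by
                rw [mul_left_comm, ENNReal.mul_inv_cancel h0 ht, mul_one]
              conv_lhs => rw [add_comm]; arg 1; rw [h1]
              rw [← add_mul, tsub_add_cancel_of_le hθ1.le, one_mul]
      refine ne_top_of_le_ne_top ?_ (DD_le_DE μ hμ s I)
      refine ENNReal.add_ne_top.2 ⟨ne_top_of_le_ne_top ?_ (iSup_le hb), ENNReal.one_ne_top⟩
      exact ENNReal.mul_ne_top hR (ENNReal.inv_ne_top.2 (tsub_pos_of_lt hθ1).ne')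
    · have : PI I = ∅ := by
        ext q
        simp only [mem_PI, Finset.notMem_empty, iff_false]
        rintro ⟨h1, h2, h3⟩
        exact hI (Finset.one_lt_card.2 ⟨_, h2, _, h3, h1.ne⟩)
      rw [this, DD_empty μ hμ]
      exact ENNReal.one_ne_top

end suff

section proj
variable {p : ℕ} [Fact p.Prime]

theorem isOpenQuotientMap_mk' : IsOpenQuotientMap
    (Projectivization.mk' ℚ_[p] : {v : Fin 2 → ℚ_[p] // v ≠ 0} → P1 p) := by
  have hq : Topology.IsQuotientMap
      (Projectivization.mk' ℚ_[p] : {v : Fin 2 → ℚ_[p] // v ≠ 0} → P1 p) :=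
    isQuotientMap_quot_mk
  refine IsOpenQuotientMap.of_isOpenMap_isQuotientMap ?_ hq
  intro U hU
  rw [← hq.isOpen_preimage]
  have : Projectivization.mk' ℚ_[p] ⁻¹' (Projectivization.mk' ℚ_[p] '' U) =
      ⋃ c : ℚ_[p]ˣ, (fun v : {v : Fin 2 → ℚ_[p] // v ≠ 0} =>
        (⟨c • v.1, (smul_ne_zero_iff_ne c).2 v.2⟩ : {v : Fin 2 → ℚ_[p] // v ≠ 0})) ⁻¹' U := by
    ext v
    simp only [Set.mem_preimage, Set.mem_image, Set.mem_iUnion]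
    constructor
    · rintro ⟨w, hw, h⟩
      rw [Projectivization.mk'_eq_mk, Projectivization.mk'_eq_mk,
        Projectivization.mk_eq_mk_iff] at h
      obtain ⟨a, ha⟩ := h
      refine ⟨a, ?_⟩
      convert hw
    · rintro ⟨c, hc⟩
      refine ⟨_, hc, ?_⟩
      rw [Projectivization.mk'_eq_mk, Projectivization.mk'_eq_mk,
        Projectivization.mk_eq_mk_iff]
      exact ⟨c, rfl⟩
  rw [this]
  refine isOpen_iUnion fun c => hU.preimage ?_
  exact Continuous.subtype_mk (continuous_subtype_val.const_smul c) _

theorem P1_second : SecondCountableTopology (P1 p) :=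
  (isOpenQuotientMap_mk' (p := p)).isQuotientMap.secondCountableTopology
    (isOpenQuotientMap_mk' (p := p)).isOpenMap

theorem sdelta_smul (a b : ℚ_[p]ˣ) (v w : Fin 2 → ℚ_[p]) :
    sdelta p (a • v) (b • w) = sdelta p v w := by
  have ha : ‖(a : ℚ_[p])‖ ≠ 0 := norm_ne_zero_iff.2 a.ne_zero
  have hb : ‖(b : ℚ_[p])‖ ≠ 0 := norm_ne_zero_iff.2 b.ne_zero
  simp only [sdelta, Pi.smul_apply, Units.smul_def, smul_eq_mul, norm_mul]
  rw [show (a : ℚ_[p]) * v 0 * (b * w 1) - a * v 1 * (b * w 0)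
      = a * b * (v 0 * w 1 - v 1 * w 0) by ring, norm_mul, norm_mul,
    ← mul_max_of_nonneg _ _ (norm_nonneg _), ← mul_max_of_nonneg _ _ (norm_nonneg _)]
  rw [show ‖(a : ℚ_[p])‖ * max ‖v 0‖ ‖v 1‖ * (‖(b : ℚ_[p])‖ * max ‖w 0‖ ‖w 1‖)
    = ‖(a : ℚ_[p])‖ * ‖(b : ℚ_[p])‖ * (max ‖v 0‖ ‖v 1‖ * max ‖w 0‖ ‖w 1‖) by ring]
  rw [mul_div_mul_left _ _ (mul_ne_zero ha hb)]

theorem pdelta_mk (v w : Fin 2 → ℚ_[p]) (hv : v ≠ 0) (hw : w ≠ 0) :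
    pdelta p (Projectivization.mk ℚ_[p] v hv) (Projectivization.mk ℚ_[p] w hw) = sdelta p v w := by
  obtain ⟨a, ha⟩ := Projectivization.exists_smul_eq_mk_rep ℚ_[p] v hv
  obtain ⟨b, hb⟩ := Projectivization.exists_smul_eq_mk_rep ℚ_[p] w hw
  rw [pdelta, ← ha, ← hb, sdelta_smul]

theorem max_norm_pos {v : Fin 2 → ℚ_[p]} (hv : v ≠ 0) : 0 < max ‖v 0‖ ‖v 1‖ := by
  by_contra h
  push Not at h
  apply hv
  have h0 := (le_max_left _ _).trans h
  have h1 := (le_max_right _ _).trans h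
  ext i
  fin_cases i
  · simpa using h0
  · simpa using h1

theorem continuous_pdelta : Continuous (fun q : P1 p × P1 p => pdelta p q.1 q.2) := by
  have h := (isOpenQuotientMap_mk' (p := p)).prodMap (isOpenQuotientMap_mk' (p := p))
  rw [← h.continuous_comp_iff]
  have : ((fun q : P1 p × P1 p => pdelta p q.1 q.2) ∘
      Prod.map (Projectivization.mk' ℚ_[p]) (Projectivization.mk' ℚ_[p])) =
      fun q : {v : Fin 2 → ℚ_[p] // v ≠ 0} × {v : Fin 2 → ℚ_[p] // v ≠ 0} =>
        sdelta p q.1.1 q.2.1 := by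
    ext q
    simp only [Function.comp, Prod.map, Projectivization.mk'_eq_mk, pdelta_mk]
  rw [this]
  unfold sdelta
  have c1 : ∀ i, Continuous fun q : {v : Fin 2 → ℚ_[p] // v ≠ 0} × {v : Fin 2 → ℚ_[p] // v ≠ 0} =>
      q.1.1 i := fun i => (continuous_apply i).comp (continuous_subtype_val.comp continuous_fst)
  have c2 : ∀ i, Continuous fun q : {v : Fin 2 → ℚ_[p] // v ≠ 0} × {v : Fin 2 → ℚ_[p] // v ≠ 0} =>
      q.2.1 i := fun i => (continuous_apply i).comp (continuous_subtype_val.comp continuous_snd)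
  refine Continuous.div ?_ ?_ ?_
  · exact (((c1 0).mul (c2 1)).sub ((c1 1).mul (c2 0))).norm
  · exact ((c1 0).norm.max (c1 1).norm).mul ((c2 0).norm.max (c2 1).norm)
  · intro q
    exact (mul_pos (max_norm_pos q.1.2) (max_norm_pos q.2.2)).ne'

theorem pdelta_self (ξ : P1 p) : pdelta p ξ ξ = 0 := by
  simp [pdelta, sdelta, mul_comm]

theorem eq_of_pdelta {ξ η : P1 p} (h : pdelta p ξ η = 0) : ξ = η := by
  induction ξ using Projectivization.ind with | _ v hv =>
  induction η using Projectivization.ind with | _ w hw =>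
  rw [pdelta_mk, sdelta, div_eq_zero_iff,
    or_iff_left (mul_pos (max_norm_pos hv) (max_norm_pos hw)).ne', norm_eq_zero, sub_eq_zero] at h
  rw [Projectivization.mk_eq_mk_iff']
  by_cases h1 : w 1 = 0
  · have h0 : w 0 ≠ 0 := by
      intro h0
      apply hw
      ext i
      fin_cases i
      · exact h0
      · exact h1
    rw [h1, mul_zero, eq_comm, mul_eq_zero, or_iff_left h0] at h
    refine ⟨v 0 / w 0, ?_⟩
    ext i
    fin_cases i
    · simp [h0]
    · simp [h, h1]
  · refine ⟨v 1 / w 1, ?_⟩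
    ext i
    fin_cases i
    · simp only [Fin.zero_eta, Pi.smul_apply, smul_eq_mul]
      field_simp
      rw [mul_comm (w 1)]
      exact h.symm
    · simp [h1]

theorem P1_hausdorff : T2Space (P1 p) := by
  rw [t2_iff_isClosed_diagonal]
  have : Set.diagonal (P1 p) = (fun q : P1 p × P1 p => pdelta p q.1 q.2) ⁻¹' {0} := by
    ext q
    simp only [Set.mem_diagonal_iff, Set.mem_preimage, Set.mem_singleton_iff]
    exact ⟨fun h => by rw [h, pdelta_self], eq_of_pdelta⟩
  rw [this]
  exact isClosed_singleton.preimage continuous_pdelta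

attribute [local instance] P1_second P1_hausdorff

/-- chart vectors -/
noncomputable def vec (k : Fin (p + 1)) (x : ℚ_[p]) : Fin 2 → ℚ_[p] :=
  if (k : ℕ) < p then ![x + (k : ℕ), 1] else ![1, x]

theorem vec_ne (k : Fin (p + 1)) (x : ℚ_[p]) : vec k x ≠ 0 := by
  intro h
  unfold vec at h
  split_ifs at h
  · simpa using congrFun h 1
  · simpa using congrFun h 0

/-- charts -/
noncomputable def phi (k : Fin (p + 1)) (x : ℚ_[p]) : P1 p :=
  Projectivization.mk ℚ_[p] (vec k x) (vec_ne k x)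

theorem continuous_vec (k : Fin (p + 1)) : Continuous (vec (p := p) k) := by
  unfold vec
  split_ifs
  · refine continuous_pi fun i => ?_
    fin_cases i
    · simp; fun_prop
    · simp; fun_prop
  · refine continuous_pi fun i => ?_
    fin_cases i
    · simp; fun_prop
    · simp; fun_prop

theorem continuous_phi (k : Fin (p + 1)) : Continuous (phi (p := p) k) :=
  (isOpenQuotientMap_mk' (p := p)).continuous.comp
    (Continuous.subtype_mk (continuous_vec k) (vec_ne k))

theorem phi_inj (k : Fin (p + 1)) : Function.Injective (phi (p := p) k) := by
  intro x y h
  have h1 := pdelta_self (phi k x)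
  nth_rewrite 2 [h] at h1
  unfold phi at h1
  rw [pdelta_mk, sdelta, div_eq_zero_iff,
    or_iff_left (mul_pos (max_norm_pos (vec_ne k x)) (max_norm_pos (vec_ne k y))).ne',
    norm_eq_zero, sub_eq_zero] at h1
  unfold vec at h1
  split_ifs at h1
  · simpa using h1
  · simpa using h1.symm

theorem iota_eq (x : ℚ_[p]) : iota p x = phi 0 x := by
  have : 0 < p := (Fact.out : p.Prime).pos
  unfold iota phi
  congr 1
  simp [vec, this]

theorem phi_emb (k : Fin (p + 1)) : MeasurableEmbedding (phi (p := p) k) :=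
  (continuous_phi k).measurableEmbedding (phi_inj k)

theorem max_vec (k : Fin (p + 1)) {x : ℚ_[p]} (hx : x ∈ Pball p) :
    max ‖vec k x 0‖ ‖vec k x 1‖ = 1 := by
  have hx' : ‖x‖ < 1 := hx
  unfold vec
  split_ifs
  · have : ‖x + (k : ℕ)‖ ≤ 1 :=
      (Padic.nonarchimedean x _).trans (max_le hx'.le (norm_nat_le _))
    simp [this]
  · simp [hx'.le]

theorem pdelta_phi_same (k : Fin (p + 1)) {x y : ℚ_[p]} (hx : x ∈ Pball p) (hy : y ∈ Pball p) :
    pdelta p (phi k x) (phi k y) = ‖x - y‖ := by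
  unfold phi
  rw [pdelta_mk, sdelta, max_vec k hx, max_vec k hy]
  unfold vec
  split_ifs
  · simp
  · simp [norm_sub_rev]

theorem norm_one_sub_small {z : ℚ_[p]} (hz : ‖z‖ < 1) : ‖1 - z‖ = 1 := by
  rw [sub_eq_add_neg, Padic.add_eq_max_of_ne (by simpa using hz.ne')]
  simp [hz.le]

theorem pdelta_phi_ne {k l : Fin (p + 1)} (h : k ≠ l) {x y : ℚ_[p]} (hx : x ∈ Pball p)
    (hy : y ∈ Pball p) : pdelta p (phi k x) (phi l y) = 1 := by
  have hx' : ‖x‖ < 1 := hx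
  have hy' : ‖y‖ < 1 := hy
  have hn : ((k : ℕ)) ≠ l := fun h' => h (Fin.ext h')
  have key : ∀ (k : ℕ) (x y : ℚ_[p]), ‖x‖ < 1 → ‖y‖ < 1 → ‖(x + k) * y‖ < 1 := by
    intro k x y hx hy
    rw [norm_mul]
    have : ‖x + (k : ℕ)‖ ≤ 1 :=
      (Padic.nonarchimedean x _).trans (max_le hx.le (norm_nat_le _))
    calc _ ≤ 1 * ‖y‖ := by gcongr
      _ < 1 := by simpa using hy
  unfold phi
  rw [pdelta_mk, sdelta, max_vec k hx, max_vec l hy]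
  unfold vec
  split_ifs with h1 h2 h2
  · have := norm_residue_ne h1 h2 hn hx hy
    simpa using this
  · have := norm_one_sub_small (key k x y hx' hy')
    rw [norm_sub_rev] at this
    simpa using this
  · have := norm_one_sub_small (key l y x hy' hx')
    simpa [mul_comm] using this
  · exfalso; omega

theorem phi_cover (ξ : P1 p) : ∃ k : Fin (p + 1), ∃ x ∈ Pball p, phi k x = ξ := by
  induction ξ using Projectivization.ind with | _ v hv =>
  by_cases h : ‖v 0‖ ≤ ‖v 1‖
  · have h1 : v 1 ≠ 0 := by
      intro h1
      have := max_norm_pos hv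
      simp [h1] at h this
      exact this h
    have hz : v 0 / v 1 ∈ Zball p := by
      change ‖_‖ ≤ 1
      rw [norm_div]
      exact div_le_one_of_le₀ h (norm_nonneg _)
    obtain ⟨a, ha⟩ := exists_residue hz
    refine ⟨a.castSucc, _, ha, ?_⟩
    unfold phi
    rw [Projectivization.mk_eq_mk_iff']
    refine ⟨(v 1)⁻¹, ?_⟩
    ext i
    fin_cases i
    · simp [vec]; ring
    · simp [vec, h1]
  · push Not at h
    have h0 : v 0 ≠ 0 := by
      intro h0
      simp [h0] at h
      exact absurd h (not_lt.2 (norm_nonneg _))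
    refine ⟨Fin.last p, v 1 / v 0, ?_, ?_⟩
    · change ‖_‖ < 1
      rw [norm_div]
      exact (div_lt_one (norm_pos_iff.2 h0)).2 h
    · unfold phi
      rw [Projectivization.mk_eq_mk_iff']
      refine ⟨(v 0)⁻¹, ?_⟩
      ext i
      fin_cases i
      · simp [vec, h0]
      · simp [vec]; ring

theorem mobius_mk (A : Matrix (Fin 2) (Fin 2) ℚ_[p]) (v : Fin 2 → ℚ_[p]) (hv : v ≠ 0)
    (h : A.mulVec v ≠ 0) :
    mobius p A (Projectivization.mk ℚ_[p] v hv) = Projectivization.mk ℚ_[p] (A.mulVec v) h := by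
  obtain ⟨a, ha⟩ := Projectivization.exists_smul_eq_mk_rep ℚ_[p] v hv
  have h1 : A.mulVec (Projectivization.mk ℚ_[p] v hv).rep = a • A.mulVec v := by
    rw [← ha, Units.smul_def, Matrix.mulVec_smul, Units.smul_def]
  have h2 : A.mulVec (Projectivization.mk ℚ_[p] v hv).rep ≠ 0 := by
    rw [h1]; exact (smul_ne_zero_iff_ne a).2 h
  unfold mobius
  rw [dif_pos h2, Projectivization.mk_eq_mk_iff]
  exact ⟨a, h1.symm⟩

variable (ν : Measure (P1 p)) (hν : IsGLInvariant p ν)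

theorem vec_zero (x : ℚ_[p]) : vec 0 x = ![x, 1] := by
  have : 0 < p := (Fact.out : p.Prime).pos
  simp [vec, this]

theorem nu_phi (hν : IsGLInvariant p ν) (k : Fin (p + 1)) (S : Set ℚ_[p]) (hS : MeasurableSet S) :
    ν (phi k '' S) = ν (phi 0 '' S) := by
  have hM := (phi_emb (p := p) 0).measurableSet_image.2 hS
  by_cases hk : (k : ℕ) < p
  · have h := hν !![1, (k : ℕ); 0, 1] (by
      intro i j
      fin_cases i <;> fin_cases j <;> simp [norm_nat_le]) (by simp) _ hM
    rw [← h, Set.image_image]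
    congr 1
    refine Set.image_congr fun x _ => ?_
    have e : Matrix.mulVec !![1, ((k : ℕ) : ℚ_[p]); 0, 1] (vec 0 x) = vec k x := by
      rw [vec_zero, vec, if_pos hk]
      ext i; fin_cases i <;> simp
    unfold phi
    rw [mobius_mk _ _ _ (by rw [e]; exact vec_ne _ _)]
    congr 1
    exact e.symm
  · have h := hν !![0, 1; 1, 0] (by
      intro i j
      fin_cases i <;> fin_cases j <;> simp) (by simp) _ hM
    rw [← h, Set.image_image]
    congr 1
    refine Set.image_congr fun x _ => ?_
    have e : Matrix.mulVec !![(0 : ℚ_[p]), 1; 1, 0] (vec 0 x) = vec k x := by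
      rw [vec_zero, vec, if_neg hk]
      ext i; fin_cases i <;> simp
    unfold phi
    rw [mobius_mk _ _ _ (by rw [e]; exact vec_ne _ _)]
    congr 1
    exact e.symm

theorem nu_shift (hν : IsGLInvariant p ν) (y : ℚ_[p]) (hy : y ∈ Pball p) (S : Set ℚ_[p])
    (hS : MeasurableSet S) :
    ν (phi 0 '' ((fun x => x + y) '' S)) = ν (phi 0 '' S) := by
  have hy' : ‖y‖ < 1 := hy
  have hM := (phi_emb (p := p) 0).measurableSet_image.2 hS
  have h := hν !![1, y; 0, 1] (by
      intro i j
      fin_cases i <;> fin_cases j <;> simp [hy'.le]) (by simp) _ hM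
  rw [← h, Set.image_image, Set.image_image]
  congr 1
  refine Set.image_congr fun x _ => ?_
  have e : Matrix.mulVec !![1, y; 0, 1] (vec 0 x) = vec 0 (x + y) := by
    rw [vec_zero, vec_zero]
    ext i; fin_cases i <;> simp
  unfold phi
  rw [mobius_mk _ _ _ (by rw [e]; exact vec_ne _ _)]
  congr 1
  exact e.symm

theorem nu_pinv (hν : IsGLInvariant p ν) : PInv ((ν.comap (phi 0)).restrict (Pball p)) := by
  refine ⟨?_, ?_⟩
  · rw [Measure.restrict_apply measurableSet_Pball.compl, Set.compl_inter_self, measure_empty]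
  · intro y hy M hM
    have hm : Measurable (fun x : ℚ_[p] => x + y) := measurable_add_const y
    rw [Measure.restrict_apply (hm hM), Measure.restrict_apply hM,
      (phi_emb 0).comap_apply, (phi_emb 0).comap_apply,
      ← nu_shift ν hν y hy _ ((hm hM).inter measurableSet_Pball)]
    congr 2
    ext x
    simp only [Set.mem_image, Set.mem_inter_iff, Set.mem_preimage]
    constructor
    · rintro ⟨z, ⟨hz, hz'⟩, rfl⟩
      exact ⟨hz, Pball_add hz' hy⟩
    · rintro ⟨hx, hx'⟩
      exact ⟨x - y, ⟨by simpa using hx, Pball_sub hx' hy⟩, by simp⟩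

theorem nu_decomp [IsProbabilityMeasure ν] (hν : IsGLInvariant p ν) (M : Set (P1 p))
    (hM : MeasurableSet M) :
    ν M = ∑ k : Fin (p + 1), (ν.comap (phi 0)).restrict (Pball p) (phi k ⁻¹' M) := by
  have hS : ∀ k : Fin (p + 1), MeasurableSet (phi k ⁻¹' M ∩ Pball p) := fun k =>
    ((continuous_phi k).measurable hM).inter measurableSet_Pball
  have e : M = ⋃ k : Fin (p + 1), phi k '' (phi k ⁻¹' M ∩ Pball p) := by
    ext ξ
    simp only [Set.mem_iUnion, Set.mem_image, Set.mem_inter_iff, Set.mem_preimage]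
    constructor
    · intro h
      obtain ⟨k, x, hx, rfl⟩ := phi_cover ξ
      exact ⟨k, x, ⟨h, hx⟩, rfl⟩
    · rintro ⟨k, x, ⟨h, _⟩, rfl⟩
      exact h
  nth_rewrite 1 [e]
  rw [measure_iUnion, tsum_fintype]
  · refine Finset.sum_congr rfl fun k _ => ?_
    rw [nu_phi ν hν k _ (hS k), Measure.restrict_apply ((continuous_phi k).measurable hM),
      (phi_emb 0).comap_apply]
  · intro k l hkl
    rw [Function.onFun, Set.disjoint_left]
    rintro _ ⟨x, hx, rfl⟩ ⟨y, hy, h⟩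
    have h1 := pdelta_phi_ne hkl hx.2 hy.2
    rw [h, pdelta_self] at h1
    exact zero_ne_one h1
  · exact fun k => (phi_emb k).measurableSet_image.2 (hS k)

theorem nu_final [IsProbabilityMeasure ν] (hν : IsGLInvariant p ν) (μ : Measure ℚ_[p])
    [μ.IsAddHaarMeasure] (hμ : μ (Zball p) = 1) (M : Set (P1 p)) (hM : MeasurableSet M) :
    ν M = ((p : ENNReal) + 1)⁻¹ * ∑ k : Fin (p + 1), mP μ (phi k ⁻¹' M) := by
  have := mP_prob μ hμ
  set m' := (ν.comap (phi 0)).restrict (Pball p) with hm'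
  have hfin : IsFiniteMeasure m' := by
    refine ⟨?_⟩
    rw [hm', Measure.restrict_apply MeasurableSet.univ, (phi_emb 0).comap_apply]
    exact measure_lt_top _ _
  have hu := (mP_pinv μ).uniq (nu_pinv ν hν)
  rw [← hm'] at hu
  have h1 := nu_decomp ν hν Set.univ MeasurableSet.univ
  rw [← hm'] at h1
  simp only [measure_univ, Set.preimage_univ, Finset.sum_const, Finset.card_univ, Fintype.card_fin,
    nsmul_eq_mul] at h1
  push_cast at h1
  have hc : m' Set.univ = ((p : ENNReal) + 1)⁻¹ := by
    rw [mul_comm] at h1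
    exact ENNReal.eq_inv_of_mul_eq_one_left h1.symm
  rw [nu_decomp ν hν M hM, ← hm', Finset.mul_sum]
  refine Finset.sum_congr rfl fun k _ => ?_
  nth_rewrite 1 [hu]
  rw [Measure.smul_apply, hc, smul_eq_mul]

end proj

section fin
variable {p : ℕ} [Fact p.Prime] {N : ℕ}

/-- the integrand on the projective line -/
noncomputable def FF (p : ℕ) [Fact p.Prime] (s : Fin N → Fin N → ℂ) (x : Fin N → P1 p) : ℂ :=
  ∏ q ∈ pairs N, ((pdelta p (x q.1) (x q.2) : ℝ) : ℂ) ^ s q.1 q.2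

/-- the integrand on the ball -/
noncomputable def ff (s : Fin N → Fin N → ℂ) (S : Finset (Fin N × Fin N)) (x : Fin N → ℚ_[p]) : ℂ :=
  ∏ q ∈ S, ((‖x q.1 - x q.2‖ : ℝ) : ℂ) ^ s q.1 q.2

attribute [local instance] P1_second P1_hausdorff

theorem measurable_pdelta : Measurable (fun q : P1 p × P1 p => pdelta p q.1 q.2) :=
  continuous_pdelta.measurable

theorem meas_pair {X : Type*} [MeasurableSpace X] {f : X → X → ℝ}
    (hf : Measurable fun q : X × X => f q.1 q.2) (i j : Fin N) :
    Measurable (fun x : Fin N → X => f (x i) (x j)) :=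
  hf.comp (Measurable.prodMk (measurable_pi_apply i) (measurable_pi_apply j))

theorem measurable_pdelta_pi (i j : Fin N) :
    Measurable (fun x : Fin N → P1 p => pdelta p (x i) (x j)) :=
  meas_pair measurable_pdelta i j

theorem measurable_pdelta_pow (i j : Fin N) (c : ℂ) :
    Measurable (fun x : Fin N → P1 p => ((pdelta p (x i) (x j) : ℝ) : ℂ) ^ c) :=
  (Complex.measurable_ofReal.comp (measurable_pdelta_pi i j)).pow_const c

theorem measurable_FF (s : Fin N → Fin N → ℂ) : Measurable (FF p s) := by
  refine Finset.measurable_fun_prod (pairs N) fun q _ => ?_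
  exact measurable_pdelta_pow q.1 q.2 (s q.1 q.2)

theorem measurable_ff (s : Fin N → Fin N → ℂ) (S) : Measurable (ff (p := p) s S) := by
  unfold ff
  refine Finset.measurable_prod _ fun q _ => ?_
  refine (Complex.measurable_ofReal.comp ?_).pow_const _
  exact ((measurable_pi_apply q.1).sub (measurable_pi_apply q.2)).norm

theorem PI_univ : PI (Finset.univ : Finset (Fin N)) = pairs N := by
  simp [PI]

theorem FF_phi (s : Fin N → Fin N → ℂ) (κ : Fin N → Fin (p + 1)) (x : Fin N → ℚ_[p])
    (hx : ∀ i, x i ∈ Pball p) :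
    FF p s (fun i => phi (κ i) (x i)) = ff s (same κ (PI Finset.univ)) x := by
  unfold FF ff same
  rw [PI_univ, Finset.prod_filter]
  refine Finset.prod_congr rfl fun q _ => ?_
  dsimp only
  split_ifs with h
  · rw [h, pdelta_phi_same _ (hx _) (hx _)]
  · rw [pdelta_phi_ne h (hx _) (hx _)]
    simp

theorem measurable_phis (κ : Fin N → Fin (p + 1)) :
    Measurable (fun (x : Fin N → ℚ_[p]) i => phi (κ i) (x i)) :=
  measurable_pi_lambda _ fun i => (continuous_phi (κ i)).measurable.comp (measurable_pi_apply i)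

theorem enorm_ff (s : Fin N → Fin N → ℂ) (S) (x : Fin N → ℚ_[p]) : ‖ff s S x‖ₑ = prS s S x := by
  unfold ff prS hh
  rw [← ofReal_norm, norm_prod, ENNReal.ofReal_prod_of_nonneg (fun _ _ => norm_nonneg _)]
  exact Finset.prod_congr rfl fun q _ => ofReal_norm _

theorem integrable_ff (μ : Measure ℚ_[p]) (s : Fin N → Fin N → ℂ) (S) :
    Integrable (ff s S) (Measure.pi fun _ => mP μ) ↔ DD μ s S ≠ ⊤ := by
  rw [Integrable, and_iff_right (measurable_ff s S).aestronglyMeasurable, HasFiniteIntegral,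
    lt_top_iff_ne_top]
  simp only [enorm_ff]
  rfl

variable (μ : Measure ℚ_[p]) [μ.IsAddHaarMeasure]
  (ν : Measure (P1 p)) [IsProbabilityMeasure ν]

theorem FF_ae (hμ : μ (Zball p) = 1) (s : Fin N → Fin N → ℂ) (κ : Fin N → Fin (p + 1)) :
    (FF p s ∘ fun (x : Fin N → ℚ_[p]) i => phi (κ i) (x i)) =ᵐ[Measure.pi fun _ => mP μ]
      ff s (same κ (PI Finset.univ)) := by
  filter_upwards [ae_P μ hμ] with x hx
  exact FF_phi s κ x hx

theorem pi_nu (hμ : μ (Zball p) = 1) (hν : IsGLInvariant p ν) :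
    Measure.pi (fun _ : Fin N => ν) = (((p : ENNReal) + 1)⁻¹) ^ N •
      ∑ κ : Fin N → Fin (p + 1), (Measure.pi (fun _ : Fin N => mP μ)).map
        (fun x i => phi (κ i) (x i)) := by
  have := mP_prob μ hμ
  exact pi_of_sum (mP μ) ν _ phi (fun k => (continuous_phi k).measurable)
    (nu_final ν hν μ hμ)

theorem integrable_FF_map (hμ : μ (Zball p) = 1) (s : Fin N → Fin N → ℂ)
    (κ : Fin N → Fin (p + 1)) :
    Integrable (FF p s) ((Measure.pi (fun _ : Fin N => mP μ)).map (fun x i => phi (κ i) (x i))) ↔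
      DD μ s (same κ (PI Finset.univ)) ≠ ⊤ := by
  rw [integrable_map_measure (measurable_FF s).aestronglyMeasurable
    (measurable_phis κ).aemeasurable, integrable_congr (FF_ae μ hμ s κ), integrable_ff]

theorem integrable_FF (hμ : μ (Zball p) = 1) (hν : IsGLInvariant p ν) (s : Fin N → Fin N → ℂ) :
    Integrable (FF p s) (Measure.pi fun _ => ν) ↔ InOmega Finset.univ s := by
  rw [pi_nu μ ν hμ hν, integrable_smul_measure (by simp) (by simp), integrable_finsetSum_measure]
  simp only [integrable_FF_map μ hμ, Finset.mem_univ, true_imp_iff]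
  constructor
  · intro h lam _ hc
    have h0 := h fun _ => 0
    have e : same (fun _ : Fin N => (0 : Fin (p + 1))) (PI Finset.univ) = PI Finset.univ := by
      simp [same]
    rw [e] at h0
    exact necessity μ hμ s lam hc (DD_subset μ hμ s lam h0)
  · intro h κ
    rw [DD_blocks μ hμ]
    exact ENNReal.prod_ne_top fun k _ => sufficiency μ hμ s h _

theorem int_ff [SigmaFinite μ] (s : Fin N → Fin N → ℂ)
    (κ : Fin N → Fin (p + 1)) :
    ∫ x, ff s (same κ (PI Finset.univ)) x ∂(Measure.pi fun _ => μ.restrict (Pball p)) =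
      ∏ k, ZI p μ (Pball p) (Finset.univ.filter fun i => κ i = k) s := by
  rw [← map_glue κ (μ.restrict (Pball p)), integral_map (measurable_glue κ).aemeasurable
    (measurable_ff s _).aestronglyMeasurable]
  unfold ZI
  rw [← integral_fintype_prod_eq_prod]
  congr 1
  ext z
  unfold ff
  rw [same_block]
  refine Finset.prod_congr rfl fun k _ => ?_
  symm
  refine Finset.prod_bij (fun q _ => (q.1.1, q.2.1)) ?_ ?_ ?_ ?_
  · intro q hq
    rw [mem_PI]
    exact ⟨(Finset.mem_filter.1 hq).2, q.1.2, q.2.2⟩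
  · intro q _ r _ h
    simp only [Prod.mk.injEq] at h
    exact Prod.ext (Subtype.ext h.1) (Subtype.ext h.2)
  · intro q hq
    rw [mem_PI] at hq
    exact ⟨(⟨q.1, hq.2.1⟩, ⟨q.2, hq.2.2⟩), by simpa using hq.1, rfl⟩
  · rintro ⟨⟨a, ha⟩, ⟨b, hb⟩⟩ _
    obtain rfl : κ a = k := (Finset.mem_filter.1 ha).2
    have hb' : κ b = κ a := (Finset.mem_filter.1 hb).2
    have e : ∀ (k : Fin (p + 1)) (h : b ∈ Finset.univ.filter fun i => κ i = k),
        z k ⟨b, h⟩ = glue κ z b := by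
      intro k h
      obtain rfl : κ b = k := (Finset.mem_filter.1 h).2
      rfl
    simp only [e]
    rfl

theorem finsum_J {M : Type*} [AddCommMonoid M] (g : (Fin (p + 1) → Finset (Fin N)) → M) :
    ∑ᶠ J ∈ {J : Fin (p + 1) → Finset (Fin N) |
      (∀ k l, k ≠ l → Disjoint (J k) (J l)) ∧ ∀ i, ∃ k, i ∈ J k}, g J =
    ∑ κ : Fin N → Fin (p + 1), g fun k => Finset.univ.filter fun i => κ i = k := by
  have hinj : Function.Injective (fun (κ : Fin N → Fin (p + 1)) (k : Fin (p + 1)) =>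
      Finset.univ.filter fun i => κ i = k) := by
    intro κ κ' h
    ext i
    have h1 := congrFun h (κ i)
    dsimp only at h1
    have h2 : i ∈ Finset.univ.filter fun j => κ' j = κ i := by
      rw [← h1]; simp
    rw [(Finset.mem_filter.1 h2).2]
  have hset : {J : Fin (p + 1) → Finset (Fin N) |
      (∀ k l, k ≠ l → Disjoint (J k) (J l)) ∧ ∀ i, ∃ k, i ∈ J k} =
      Set.range (fun (κ : Fin N → Fin (p + 1)) (k : Fin (p + 1)) =>
        Finset.univ.filter fun i => κ i = k) := by
    ext J
    simp only [Set.mem_ofPred_eq, Set.mem_range]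
    constructor
    · rintro ⟨hd, hc⟩
      choose κ hκ using hc
      refine ⟨κ, ?_⟩
      ext k i
      simp only [Finset.mem_filter, Finset.mem_univ, true_and]
      constructor
      · rintro rfl; exact hκ i
      · intro hi
        by_contra hne
        exact Finset.disjoint_left.1 (hd _ _ hne) (hκ i) hi
    · rintro ⟨κ, rfl⟩
      refine ⟨fun k l hkl => ?_, fun i => ⟨κ i, by simp⟩⟩
      rw [Finset.disjoint_left]
      intro i hi hi'
      exact hkl ((Finset.mem_filter.1 hi).2.symm.trans (Finset.mem_filter.1 hi').2)
  rw [hset, finsum_mem_range hinj, finsum_eq_sum_of_fintype]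

theorem int_FF [SigmaFinite μ] (hμ : μ (Zball p) = 1) (hν : IsGLInvariant p ν)
    (s : Fin N → Fin N → ℂ) (hs : InOmega Finset.univ s) :
    ∫ x, FF p s x ∂(Measure.pi fun _ => ν) = ((p : ℂ) / ((p : ℂ) + 1)) ^ N *
      ∑ κ : Fin N → Fin (p + 1),
        ∏ k, ZI p μ (Pball p) (Finset.univ.filter fun i => κ i = k) s := by
  have hint : ∀ κ ∈ (Finset.univ : Finset (Fin N → Fin (p + 1))), Integrable (FF p s)
      ((Measure.pi (fun _ : Fin N => mP μ)).map (fun x i => phi (κ i) (x i))) := by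
    intro κ _
    rw [integrable_FF_map μ hμ, DD_blocks μ hμ]
    exact ENNReal.prod_ne_top fun k _ => sufficiency μ hμ s hs _
  rw [pi_nu μ ν hμ hν, integral_smul_measure, integral_finsetSum_measure hint]
  have hk : ∀ κ : Fin N → Fin (p + 1),
      ∫ x, FF p s x ∂((Measure.pi (fun _ : Fin N => mP μ)).map (fun x i => phi (κ i) (x i))) =
      (p : ℂ) ^ N * ∏ k, ZI p μ (Pball p) (Finset.univ.filter fun i => κ i = k) s := by
    intro κ
    rw [integral_map (measurable_phis κ).aemeasurable (measurable_FF s).aestronglyMeasurable,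
      ← int_ff]
    have h1 := integral_congr_ae (FF_ae μ hμ s κ)
    simp only [Function.comp_def] at h1
    rw [h1]
    unfold mP
    rw [pi_smul _ _ (ENNReal.natCast_ne_top p), integral_smul_measure]
    simp [Complex.real_smul]
  simp only [hk]
  rw [← Finset.mul_sum, Complex.real_smul, div_pow]
  have : ((((p : ENNReal) + 1)⁻¹ ^ N).toReal : ℂ) = (((p : ℂ) + 1) ^ N)⁻¹ := by
    rw [ENNReal.toReal_pow, ENNReal.toReal_inv,
      ENNReal.toReal_add (ENNReal.natCast_ne_top p) ENNReal.one_ne_top]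
    simp
  rw [this]
  ring

end fin

theorem statement_8 (p : ℕ) [Fact p.Prime] (N : ℕ) (hN : 2 ≤ N)
    (μ : Measure ℚ_[p]) [SigmaFinite μ] [μ.IsAddHaarMeasure] (hμ : μ (Zball p) = 1)
    (ν : Measure (P1 p)) [IsProbabilityMeasure ν] (hν : IsGLInvariant p ν)
    (s : Fin N → Fin N → ℂ) :
    (Integrable
        (fun x : Fin N → P1 p =>
          ∏ q ∈ pairs N, ((pdelta p (x q.1) (x q.2) : ℝ) : ℂ) ^ s q.1 q.2)
        (Measure.pi fun _ => ν) ↔ InOmega Finset.univ s) ∧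
    (InOmega Finset.univ s →
      ZP1s p ν N s =
        ((p : ℂ) / ((p : ℂ) + 1)) ^ N *
          ∑ᶠ J ∈ {J : Fin (p + 1) → Finset (Fin N) |
              (∀ k l, k ≠ l → Disjoint (J k) (J l)) ∧ ∀ i, ∃ k, i ∈ J k},
            ∏ k, ZI p μ (Pball p) (J k) s) := by
  refine ⟨integrable_FF μ ν hμ hν s, fun hs => ?_⟩
  rw [finsum_J]
  exact int_FF μ ν hμ hν s hs

end LogCoulomb
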